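/- arXiv:2410.07811 — 5 statements merged into one kernel-verified Lean document; each statement's English description precedes it below -/
import Mathlib

section
/- Let Ω, U, λ, u be as in the setting. Then the set of critical values of u on the closure of Ω, namely { u(z) : z ∈ closure(Ω) and ∇u(z) = 0 }, is a finite set. -/
open Metric Set Filter Topology MeasureTheory

noncomputable section

abbrev E2 := EuclideanSpace ℝ (Fin 2)

/-- The Laplacian of `u`: the sum of the two pure second partial derivatives. -/
def lap (u : E2 → ℝ) (z : E2) : ℝ :=
  ∑ i : Fin 2, iteratedFDeriv ℝ 2 u z (fun _ => EuclideanSpace.single i 1)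

open Asymptotics in
theorem aux_partial {E F : Type*} [NormedAddCommGroup E] [NormedSpace ℝ E]
    [NormedAddCommGroup F] [NormedSpace ℝ F] (p : FormalMultilinearSeries ℝ E F) (k : ℕ)
    (hk : ∀ j < k, ∀ y, (p j fun _ => y) = 0) :
    p.partialSum (k + 1) = fun y => p k fun _ => y := by
  funext z
  refine Finset.sum_eq_single _ (fun b hb hnb => ?_) fun hn => ?_
  · have := Finset.mem_range_succ_iff.mp hb
    simp only [hk b (this.lt_of_ne hnb)]
  · exact False.elim (hn (Finset.mem_range.mpr (lt_add_one k)))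

open Asymptotics in
theorem aux_fderiv_bigO {E F : Type*} [NormedAddCommGroup E] [NormedSpace ℝ E]
    [NormedAddCommGroup F] [NormedSpace ℝ F] [CompleteSpace F] (f : E → F) (n : ℕ)
    (hf : AnalyticAt ℝ f 0) (hO : f =O[𝓝 0] fun y => ‖y‖ ^ (n + 1)) :
    (fderiv ℝ f) =O[𝓝 0] fun y => ‖y‖ ^ n := by
  obtain ⟨p, r, hp⟩ := hf
  have hz : ∀ j, j < n + 1 → ∀ y, (p j fun _ => y) = 0 := by
    intro j
    refine Nat.strong_induction_on j fun k hk hkn => ?_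
    have psum_eq := aux_partial p k (fun b hb => hk b hb (hb.trans hkn))
    have h := hp.hasFPowerSeriesAt.isBigO_sub_partialSum_pow (k + 1)
    simp only [psum_eq, zero_add] at h
    have h2 : f =O[𝓝 0] fun y => ‖y‖ ^ (k + 1) := by
      refine hO.trans ?_
      refine IsBigO.of_bound 1 ?_
      filter_upwards [Metric.ball_mem_nhds (0 : E) one_pos] with y hy
      rw [mem_ball_zero_iff] at hy
      simp only [norm_pow, norm_norm, one_mul]
      exact pow_le_pow_of_le_one (norm_nonneg _) hy.le (by omega)
    have h3 := h2.sub h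
    simp only [sub_sub_cancel] at h3
    exact h3.continuousMultilinearMap_apply_eq_zero
  let p' : FormalMultilinearSeries ℝ E F := fun j => if j ≤ n then 0 else p j
  have hp' : HasFPowerSeriesOnBall f p' 0 r := by
    refine ⟨hp.r_le.trans (FormalMultilinearSeries.radius_le_of_le fun j => ?_), hp.r_pos, ?_⟩
    · by_cases hj : j ≤ n <;> simp [p', hj]
    · intro y hy
      have := hp.hasSum hy
      convert this using 2 with j
      by_cases hj : j ≤ n
      · simp [p', hj, hz j (Nat.lt_succ_of_le hj)]
      · simp [p', hj]
  have h := hp'.fderiv.hasFPowerSeriesAt.isBigO_sub_partialSum_pow n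
  have h0 : p'.derivSeries.partialSum n = fun _ => 0 := by
    funext y
    refine Finset.sum_eq_zero fun j hj => ?_
    rw [p'.derivSeries_eq_zero]
    · simp
    · have := Finset.mem_range.1 hj
      simp [p', this]
  simpa [h0] using h

open Asymptotics in
/-- A real-analytic function on the plane which is almost holomorphic has isolated zeros. -/
theorem aux_leading (f : ℂ → ℂ) (hf : AnalyticAt ℝ f 0) (hne : ¬ ∀ᶠ y in 𝓝 0, f y = 0)
    (hd : ∀ k : ℕ, f =O[𝓝 0] (fun y => ‖y‖ ^ k) →
      (fun y => fderiv ℝ f y Complex.I - Complex.I * fderiv ℝ f y 1) =O[𝓝 0] (fun y => ‖y‖ ^ k)) :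
    ∀ᶠ y in 𝓝 0, f y = 0 → y = 0 := by
  classical
  obtain ⟨q, r, hq⟩ := hf
  have hex : ∃ k, ∃ y, (q k fun _ => y) ≠ 0 := by
    by_contra! hcon
    apply hne
    filter_upwards [Metric.eball_mem_nhds (0 : ℂ) hq.r_pos] with y hy
    have := hq.hasSum (y := y) (by simpa using hy)
    simp only [hcon, zero_add] at this
    exact this.unique hasSum_zero
  obtain ⟨k, hk, hmin⟩ : ∃ k, (∃ y, (q k fun _ => y) ≠ 0) ∧ ∀ j < k, ∀ y, (q j fun _ => y) = 0 :=
    ⟨Nat.find hex, Nat.find_spec hex, fun j hj y => by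
      by_contra h; exact Nat.find_min hex hj ⟨y, h⟩⟩
  set Q : ℂ → ℂ := fun y => q k fun _ => y with hQ
  have hR : (fun y => f y - Q y) =O[𝓝 0] fun y => ‖y‖ ^ (k + 1) := by
    have h := hq.hasFPowerSeriesAt.isBigO_sub_partialSum_pow (k + 1)
    rw [aux_partial q k hmin] at h
    simpa using h
  have hQan : ∀ y, AnalyticAt ℝ Q y := by
    intro y
    have h1 : AnalyticAt ℝ (fun m : Fin k → ℂ => q k m) (fun _ => y) := (q k).analyticAt
    have h2 : AnalyticAt ℝ (fun y : ℂ => (fun _ : Fin k => y)) y :=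
      AnalyticAt.pi (fun _ => analyticAt_id)
    exact AnalyticAt.fun_comp (g := fun m : Fin k → ℂ => q k m) h1 h2
  have hhom : ∀ (t : ℝ) y, Q (t • y) = t ^ k • Q y := by
    intro t y
    simpa using (q k).map_smul_univ (fun _ => t) (fun _ => y)
  have hQO : Q =O[𝓝 0] fun y => ‖y‖ ^ k := by
    refine IsBigO.of_bound ‖q k‖ (Eventually.of_forall fun y => ?_)
    simpa using (q k).le_opNorm (fun _ => y)
  have hfO : f =O[𝓝 0] fun y => ‖y‖ ^ k := by
    have : (fun y : ℂ => ‖y‖ ^ (k + 1)) =O[𝓝 0] fun y => ‖y‖ ^ k := by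
      refine IsBigO.of_bound 1 ?_
      filter_upwards [Metric.ball_mem_nhds (0 : ℂ) one_pos] with y hy
      rw [mem_ball_zero_iff] at hy
      simp only [norm_pow, norm_norm, one_mul]
      exact pow_le_pow_of_le_one (norm_nonneg _) hy.le (by omega)
    simpa using (hR.trans this).add hQO
  have hfan : AnalyticAt ℝ f 0 := hq.analyticAt
  have hRd := aux_fderiv_bigO (fun y => f y - Q y) k (hfan.sub (hQan 0)) hR
  set L : (ℂ →L[ℝ] ℂ) → ℂ := fun T => T Complex.I - Complex.I * T 1 with hL
  have hLb : ∀ T, ‖L T‖ ≤ 2 * ‖T‖ := by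
    intro T
    have h1 := T.le_opNorm Complex.I
    have h2 := T.le_opNorm 1
    have h3 := norm_sub_le (T Complex.I) (Complex.I * T 1)
    simp at h1 h2 h3
    simp only [hL]; linarith
  have hLQ : (fun y => L (fderiv ℝ Q y)) =O[𝓝 0] fun y => ‖y‖ ^ k := by
    have h1 : (fun y => L (fderiv ℝ (fun y => f y - Q y) y)) =O[𝓝 0] fun y => ‖y‖ ^ k :=
      (IsBigO.of_bound 2 (Eventually.of_forall fun y => hLb _)).trans hRd
    have h2 := (hd k hfO).sub h1
    refine h2.congr' ?_ (EventuallyEq.refl _ _)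
    filter_upwards [hfan.eventually_analyticAt] with y hy
    have : fderiv ℝ (fun y => f y - Q y) y = fderiv ℝ f y - fderiv ℝ Q y :=
      fderiv_sub hy.differentiableAt (hQan y).differentiableAt
    rw [this]; simp [hL]; ring
  have hLsmul : ∀ (t : ℝ) T, L (t • T) = t • L T := by
    intro t T; simp [hL]; ring
  have hdhom : ∀ (t : ℝ) y, t • fderiv ℝ Q (t • y) = t ^ k • fderiv ℝ Q y := by
    intro t y
    have h1 : HasFDerivAt (fun y => Q (t • y)) (t • fderiv ℝ Q (t • y)) y := by
      have a := (hQan (t • y)).differentiableAt.hasFDerivAt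
      have b : HasFDerivAt (fun y : ℂ => t • y) (t • ContinuousLinearMap.id ℝ ℂ) y :=
        (hasFDerivAt_id y).const_smul t
      have c := HasFDerivAt.comp y a b
      have e : t • fderiv ℝ Q (t • y) =
          (fderiv ℝ Q (t • y)).comp (t • ContinuousLinearMap.id ℝ ℂ) :=
        ContinuousLinearMap.ext fun w => by
          simp only [smul_apply, ContinuousLinearMap.comp_apply,
            ContinuousLinearMap.id_apply, map_smul]
      rw [e]
      exact c
    have h2 : HasFDerivAt (fun y => Q (t • y)) (t ^ k • fderiv ℝ Q y) y := by
      simp only [hhom]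
      exact (hQan y).differentiableAt.hasFDerivAt.fun_const_smul (t ^ k)
    exact h1.unique h2
  have hLQ0 : ∀ v, L (fderiv ℝ Q v) = 0 := by
    intro v
    obtain ⟨C, hC⟩ := hLQ.bound
    have ht : Tendsto (fun t : ℝ => t • v) (𝓝[>] 0) (𝓝 0) := by
      have : Tendsto (fun t : ℝ => t • v) (𝓝 0) (𝓝 ((0 : ℝ) • v)) :=
        (continuous_id.smul continuous_const).tendsto 0
      rw [zero_smul] at this
      exact this.mono_left nhdsWithin_le_nhds
    have h1 : ∀ᶠ t : ℝ in 𝓝[>] 0, ‖L (fderiv ℝ Q v)‖ ≤ t * (C * ‖v‖ ^ k) := by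
      filter_upwards [ht.eventually hC, self_mem_nhdsWithin] with t h1 h2
      have h2 : 0 < t := h2
      have h3 : t • L (fderiv ℝ Q (t • v)) = t ^ k • L (fderiv ℝ Q v) := by
        rw [← hLsmul, ← hLsmul, hdhom]
      have h4 := congrArg norm h3
      rw [norm_smul, norm_smul, norm_pow, Real.norm_of_nonneg h2.le] at h4
      rw [norm_smul, Real.norm_of_nonneg h2.le, mul_pow,
        Real.norm_of_nonneg (show 0 ≤ t ^ k * ‖v‖ ^ k by positivity)] at h1
      have h5 : 0 < t ^ k := pow_pos h2 k
      refine le_of_mul_le_mul_left ?_ h5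
      rw [← h4]
      calc _ ≤ t * (C * (t ^ k * ‖v‖ ^ k)) := by gcongr
        _ = _ := by ring
    have h2 : Tendsto (fun t : ℝ => t * (C * ‖v‖ ^ k)) (𝓝[>] 0) (𝓝 0) := by
      have : Tendsto (fun t : ℝ => t * (C * ‖v‖ ^ k)) (𝓝 0) (𝓝 (0 * (C * ‖v‖ ^ k))) :=
        (continuous_id.mul continuous_const).tendsto 0
      rw [zero_mul] at this
      exact this.mono_left nhdsWithin_le_nhds
    exact norm_le_zero_iff.1 (ge_of_tendsto h2 h1)
  have hQd : Differentiable ℂ Q := by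
    intro v
    refine differentiableAt_complex_iff_differentiableAt_real.2 ⟨(hQan v).differentiableAt, ?_⟩
    exact sub_eq_zero.1 (hLQ0 v)
  have hQeq : Q = fun w => w ^ k * Q 1 := by
    refine AnalyticOnNhd.eq_of_frequently_eq (𝕜 := ℂ) (z₀ := 0)
      (fun z _ => hQd.analyticAt z) (fun z _ => ?_) ?_
    · exact (analyticAt_id.pow k).mul analyticAt_const
    · have ht : Tendsto (fun t : ℝ => (t : ℂ)) (𝓝[≠] 0) (𝓝[≠] 0) := by
        refine tendsto_nhdsWithin_of_tendsto_nhds_of_eventually_within _ ?_ ?_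
        · exact (Complex.continuous_ofReal.tendsto' 0 0 (by simp)).mono_left nhdsWithin_le_nhds
        · filter_upwards [self_mem_nhdsWithin] with t ht
          simpa using ht
      refine ht.frequently (Eventually.frequently (Eventually.of_forall fun t => ?_))
      have := hhom t 1
      simpa using this
  have hc : Q 1 ≠ 0 := by
    intro h0
    obtain ⟨y, hy⟩ := hk
    apply hy
    have := congrFun hQeq y
    rw [h0, mul_zero] at this
    exact this
  obtain ⟨C, hCpos, hC⟩ := hR.exists_pos
  have hsmall : ∀ᶠ y : ℂ in 𝓝 0, C * ‖y‖ < ‖Q 1‖ := by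
    have : Tendsto (fun y : ℂ => C * ‖y‖) (𝓝 0) (𝓝 (C * ‖(0 : ℂ)‖)) :=
      (continuous_const.mul continuous_norm).tendsto 0
    rw [norm_zero, mul_zero] at this
    exact this.eventually_lt_const (norm_pos_iff.2 hc)
  filter_upwards [hC.bound, hsmall] with y h1 h2 h3
  by_contra hy
  have h4 : 0 < ‖y‖ ^ k := pow_pos (norm_pos_iff.2 hy) k
  rw [h3, congrFun hQeq y, zero_sub, norm_neg, norm_mul, norm_pow, norm_pow, norm_norm, pow_succ,
    mul_left_comm] at h1
  have := le_of_mul_le_mul_left h1 h4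
  linarith

theorem aux_ift (F : ℂ → ℝ) (hF : AnalyticAt ℝ F 0) (hcrit : fderiv ℝ F 0 = 0)
    (e : ℂ) (c : ℂ →L[ℝ] ℝ) (hc : ∀ h, c h = 0 → ∃ s : ℝ, h = s • e)
    (he : fderiv ℝ (fderiv ℝ F) 0 e e ≠ 0) :
    ∀ᶠ y in 𝓝 0, fderiv ℝ F y = 0 → F y = F 0 := by
  have hdF : AnalyticAt ℝ (fderiv ℝ F) 0 := hF.fderiv
  set Ψ : ℂ → ℝ × ℝ := fun y => (fderiv ℝ F y e, c y) with hΨ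
  have hΨan : AnalyticAt ℝ Ψ 0 := by
    refine AnalyticAt.prod ?_ (c.analyticAt 0)
    exact (((ContinuousLinearMap.apply ℝ ℝ e).analyticAt _).comp hdF)
  set T : ℂ →L[ℝ] ℝ × ℝ :=
    ((ContinuousLinearMap.apply ℝ ℝ e).comp (fderiv ℝ (fderiv ℝ F) 0)).prod c with hT
  have hΨd : HasStrictFDerivAt Ψ T 0 := by
    refine HasStrictFDerivAt.prodMk ?_ c.hasStrictFDerivAt
    exact (ContinuousLinearMap.apply ℝ ℝ e).hasStrictFDerivAt.comp 0 hdF.hasStrictFDerivAt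
  have hinj : Function.Injective T := by
    refine (injective_iff_map_eq_zero T).2 fun h hh => ?_
    have h1 : fderiv ℝ (fderiv ℝ F) 0 h e = 0 := congrArg Prod.fst hh
    have h2 : c h = 0 := congrArg Prod.snd hh
    obtain ⟨s, rfl⟩ := hc h h2
    simp only [map_smul, smul_apply, smul_eq_mul, mul_eq_zero, he, or_false] at h1
    simp [h1]
  have hfr : Module.finrank ℝ ℂ = Module.finrank ℝ (ℝ × ℝ) := by simp
  let i : ℂ ≃L[ℝ] ℝ × ℝ :=
    (LinearEquiv.ofInjectiveOfFinrankEq T.toLinearMap hinj hfr).toContinuousLinearEquiv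
  have hi : (i : ℂ →L[ℝ] ℝ × ℝ) = T := by
    ext <;> rfl
  have hΨi : HasStrictFDerivAt Ψ (i : ℂ →L[ℝ] ℝ × ℝ) 0 := hi ▸ hΨd
  let Φ := hΨi.toOpenPartialHomeomorph Ψ
  have hΦ : (Φ : ℂ → ℝ × ℝ) = Ψ := rfl
  have h0s : (0 : ℂ) ∈ Φ.source := hΨi.mem_toOpenPartialHomeomorph_source
  have hΨ0 : Ψ 0 = (0, 0) := by simp [hΨ, hcrit]
  have hsymm : AnalyticAt ℝ Φ.symm (0, 0) := by
    have := Φ.analyticAt_symm' (i := i) h0s hΨan hΨi.hasFDerivAt.fderiv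
    rwa [hΦ, hΨ0] at this
  have hs0 : Φ.symm (0, 0) = 0 := by
    rw [← hΨ0, ← hΦ]; exact Φ.left_inv h0s
  set γ : ℝ → ℂ := fun s => Φ.symm (0, s) with hγ
  have hγan : AnalyticAt ℝ γ 0 :=
    AnalyticAt.fun_comp (g := Φ.symm) (f := fun s : ℝ => ((0 : ℝ), s)) hsymm
      (analyticAt_const.prod analyticAt_id)
  have hγ0 : γ 0 = 0 := hs0
  set φ : ℝ → ℝ := fun s => F (γ s) with hφ
  have hφan : AnalyticAt ℝ φ 0 :=
    AnalyticAt.fun_comp (g := F) (f := γ) (by rwa [hγ0]) hγan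
  have hcont : Tendsto c (𝓝 0) (𝓝 0) := c.continuous.tendsto' 0 0 (map_zero c)
  have hγt : Tendsto γ (𝓝 0) (𝓝 0) := by
    have := hγan.continuousAt.tendsto
    rwa [hγ0] at this
  have hder : ∀ᶠ s in 𝓝 0, deriv φ s = fderiv ℝ F (γ s) (deriv γ s) := by
    filter_upwards [hγan.eventually_analyticAt, hγt.eventually hF.eventually_analyticAt]
      with s h1 h2
    exact (h2.differentiableAt.hasFDerivAt.comp_hasDerivAt s
      h1.differentiableAt.hasDerivAt).deriv
  have hon : ∀ᶠ y in 𝓝 0, fderiv ℝ F y = 0 → y = γ (c y) := by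
    filter_upwards [Φ.open_source.mem_nhds h0s] with y hy h
    have h1 : Ψ y = (0, c y) := by simp [hΨ, h]
    have h2 := Φ.left_inv hy
    rw [hΦ, h1] at h2
    exact h2.symm
  have hz : ∀ᶠ y in 𝓝 0, fderiv ℝ F y = 0 → deriv φ (c y) = 0 := by
    filter_upwards [hon, hcont.eventually hder] with y h1 h2 h3
    rw [h2, ← h1 h3, h3]; simp
  rcases hφan.deriv.eventually_eq_zero_or_eventually_ne_zero with h | h
  · have hconst : ∀ᶠ s in 𝓝 0, φ s = φ 0 := by
      obtain ⟨ε, hε, hb⟩ := Metric.eventually_nhds_iff_ball.1 (h.and hφan.eventually_analyticAt)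
      filter_upwards [Metric.ball_mem_nhds (0 : ℝ) hε] with s hs
      refine Metric.isOpen_ball.is_const_of_deriv_eq_zero (convex_ball (0 : ℝ) ε).isPreconnected
        (fun x hx => (hb x hx).2.differentiableAt.differentiableWithinAt)
        (fun x hx => (hb x hx).1) hs (Metric.mem_ball_self hε)
    filter_upwards [hon, hcont.eventually hconst] with y h1 h2 h3
    have h4 : F y = φ (c y) := by rw [hφ]; exact congrArg F (h1 h3)
    rw [h4, h2, hφ]; simp [hγ0]
  · rw [eventually_nhdsWithin_iff] at h
    filter_upwards [hon, hz, hcont.eventually h] with y h1 h2 h3 h4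
    have h5 : c y = 0 := by
      by_contra h6
      exact h3 h6 (h2 h4)
    have h6 := h1 h4
    rw [h5, hγ0] at h6
    rw [h6]

open Asymptotics in
theorem aux_zero (F : ℂ → ℝ) (hF : AnalyticAt ℝ F 0) (lam : ℝ) (hF0 : F 0 = 0)
    (hne : ¬ ∀ᶠ y in 𝓝 0, F y = 0)
    (heq : ∀ᶠ y in 𝓝 0, fderiv ℝ (fderiv ℝ F) y 1 1 +
      fderiv ℝ (fderiv ℝ F) y Complex.I Complex.I + lam * F y = 0) :
    ∀ᶠ y in 𝓝 0, fderiv ℝ F y = 0 → y = 0 := by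
  have hdF : AnalyticAt ℝ (fderiv ℝ F) 0 := hF.fderiv
  set S : (ℂ →L[ℝ] ℝ) →L[ℝ] ℂ :=
    Complex.ofRealCLM.comp (ContinuousLinearMap.apply ℝ ℝ (1 : ℂ)) -
      Complex.I • Complex.ofRealCLM.comp (ContinuousLinearMap.apply ℝ ℝ Complex.I) with hS
  have hSa : ∀ T : ℂ →L[ℝ] ℝ, S T = (T 1 : ℂ) - Complex.I * (T Complex.I : ℂ) := by
    intro T; simp [hS]
  have hSb : ∀ T : ℂ →L[ℝ] ℝ, ‖T‖ ≤ 2 * ‖S T‖ := by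
    intro T
    have h1 : |T 1| ≤ ‖S T‖ := by
      have := Complex.abs_re_le_norm (S T)
      simpa [hSa] using this
    have h2 : |T Complex.I| ≤ ‖S T‖ := by
      have := Complex.abs_im_le_norm (S T)
      simpa [hSa] using this
    refine T.opNorm_le_bound (by positivity) fun h => ?_
    have h3 : T h = h.re * T 1 + h.im * T Complex.I := by
      have : h = h.re • (1 : ℂ) + h.im • Complex.I := by
        simp [Complex.re_add_im]
      conv_lhs => rw [this]
      simp only [map_add, map_smul, smul_eq_mul]
    rw [h3, Real.norm_eq_abs]
    calc _ ≤ |h.re * T 1| + |h.im * T Complex.I| := abs_add_le _ _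
      _ = |h.re| * |T 1| + |h.im| * |T Complex.I| := by rw [abs_mul, abs_mul]
      _ ≤ ‖h‖ * ‖S T‖ + ‖h‖ * ‖S T‖ := by
        gcongr
        · exact Complex.abs_re_le_norm h
        · exact Complex.abs_im_le_norm h
      _ = _ := by ring
  set f : ℂ → ℂ := fun y => S (fderiv ℝ F y) with hf
  have hfan : AnalyticAt ℝ f 0 := (S.analyticAt _).comp hdF
  -- mean value estimate
  have hmv : ∀ k : ℕ, f =O[𝓝 0] (fun y => ‖y‖ ^ k) → F =O[𝓝 0] (fun y => ‖y‖ ^ k) := by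
    intro k hk
    obtain ⟨C, hC0, hC⟩ := hk.exists_pos
    obtain ⟨ε, hε, hb⟩ := Metric.eventually_nhds_iff_ball.1
      (hC.bound.and hF.eventually_analyticAt)
    refine IsBigO.of_bound (2 * C) ?_
    filter_upwards [Metric.ball_mem_nhds (0 : ℂ) (lt_min hε one_pos)] with y hy
    rw [mem_ball_zero_iff, lt_min_iff] at hy
    have hsub : ∀ x ∈ Metric.closedBall (0 : ℂ) ‖y‖, x ∈ Metric.ball (0 : ℂ) ε := by
      intro x hx
      rw [mem_closedBall_zero_iff] at hx
      rw [mem_ball_zero_iff]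
      exact hx.trans_lt hy.1
    have := (convex_closedBall (0 : ℂ) ‖y‖).norm_image_sub_le_of_norm_fderiv_le
      (𝕜 := ℝ) (f := F) (C := 2 * C * ‖y‖ ^ k) (x := 0) (y := y)
      (fun x hx => (hb x (hsub x hx)).2.differentiableAt) (fun x hx => ?_) (by simp) (by simp)
    · rw [hF0, sub_zero, sub_zero] at this
      refine this.trans ?_
      rw [norm_pow, norm_norm]
      exact mul_le_of_le_one_right (by positivity) hy.2.le
    · have h1 := (hb x (hsub x hx)).1
      have h2 := hSb (fderiv ℝ F x)
      rw [mem_closedBall_zero_iff] at hx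
      rw [norm_pow, norm_norm] at h1
      have h3 : ‖x‖ ^ k ≤ ‖y‖ ^ k := pow_le_pow_left₀ (norm_nonneg _) hx k
      have h4 : C * ‖x‖ ^ k ≤ C * ‖y‖ ^ k := by gcongr
      have h5 : ‖S (fderiv ℝ F x)‖ ≤ C * ‖x‖ ^ k := h1
      linarith
  have hfne : ¬ ∀ᶠ y in 𝓝 0, f y = 0 := by
    intro h
    apply hne
    obtain ⟨ε, hε, hb⟩ := Metric.eventually_nhds_iff_ball.1 (h.and hF.eventually_analyticAt)
    filter_upwards [Metric.ball_mem_nhds (0 : ℂ) hε] with y hy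
    rw [← hF0]
    refine Metric.isOpen_ball.is_const_of_fderiv_eq_zero (𝕜 := ℝ)
      (convex_ball (0 : ℂ) ε).isPreconnected
      (fun x hx => (hb x hx).2.differentiableAt.differentiableWithinAt)
      (fun x hx => ?_) hy (Metric.mem_ball_self hε)
    have h1 := hSb (fderiv ℝ F x)
    have h2 : S (fderiv ℝ F x) = 0 := (hb x hx).1
    rw [h2, norm_zero, mul_zero] at h1
    exact norm_le_zero_iff.1 h1
  have key := aux_leading f hfan hfne (fun k hk => by
    have h1 := (hmv k hk).const_mul_left lam
    refine IsBigO.trans ?_ h1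
    refine IsBigO.of_bound 1 ?_
    filter_upwards [heq, hF.eventually_analyticAt] with y hy hya
    have hfd : ∀ h, fderiv ℝ f y h = S (fderiv ℝ (fderiv ℝ F) y h) := by
      intro h
      have : HasFDerivAt f (S.comp (fderiv ℝ (fderiv ℝ F) y)) y :=
        S.hasFDerivAt.comp y hya.fderiv.differentiableAt.hasFDerivAt
      rw [this.fderiv]; rfl
    have hsym : fderiv ℝ (fderiv ℝ F) y Complex.I 1 = fderiv ℝ (fderiv ℝ F) y 1 Complex.I := by
      have h2 : ContDiffAt ℝ 2 F y := hya.contDiffAt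
      exact (h2.isSymmSndFDerivAt (by simp)).eq _ _
    have : fderiv ℝ f y Complex.I - Complex.I * fderiv ℝ f y 1 =
        Complex.I * ((lam * F y : ℝ) : ℂ) := by
      have h3 : lam * F y = -(fderiv ℝ (fderiv ℝ F) y 1 1 +
        fderiv ℝ (fderiv ℝ F) y Complex.I Complex.I) := by linarith
      rw [hfd, hfd, hSa, hSa, hsym, h3]
      push_cast
      linear_combination (fderiv ℝ (fderiv ℝ F) y 1 Complex.I : ℂ) * Complex.I_sq
    rw [this, norm_mul, Complex.norm_I, one_mul, one_mul, Complex.norm_real])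
  filter_upwards [key] with y hy h
  exact hy (by simp [hf, h])

theorem aux_local (U : Set E2) (hUo : IsOpen U) (hUconn : IsConnected U)
    (lam : ℝ) (hlam : 0 < lam)
    (u : E2 → ℝ) (hu : AnalyticOnNhd ℝ u U)
    (hne : ∃ z ∈ U, u z ≠ 0)
    (heq : ∀ z ∈ U, lap u z + lam * u z = 0) (z0 : E2) (hz0 : z0 ∈ U) :
    ∀ᶠ z in 𝓝 z0, fderiv ℝ u z = 0 → u z = u z0 := by
  by_cases hcrit : fderiv ℝ u z0 = 0
  swap
  · filter_upwards [(hu z0 hz0).fderiv.continuousAt.eventually_ne hcrit] with z h1 h2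
    exact absurd h2 h1
  let ι : ℂ ≃L[ℝ] E2 := Complex.orthonormalBasisOneI.repr.toContinuousLinearEquiv
  have hι1 : ι 1 = EuclideanSpace.single 0 1 := by
    have := Complex.orthonormalBasisOneI.repr_self 0
    simp only [Complex.coe_orthonormalBasisOneI, Matrix.cons_val_zero] at this
    exact this
  have hιI : ι Complex.I = EuclideanSpace.single 1 1 := by
    have := Complex.orthonormalBasisOneI.repr_self 1
    simp only [Complex.coe_orthonormalBasisOneI, Matrix.cons_val_one] at this
    exact this
  set F : ℂ → ℝ := fun y => u (z0 + ι y) with hF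
  have hmap : Tendsto (fun y => z0 + ι y) (𝓝 0) (𝓝 z0) :=
    (continuous_const.add ι.continuous).tendsto' 0 z0 (by simp)
  have hmap' : Tendsto (fun z => ι.symm (z - z0)) (𝓝 z0) (𝓝 0) :=
    (ι.symm.continuous.comp (continuous_id.sub continuous_const)).tendsto' z0 0 (by simp)
  have hFan : AnalyticAt ℝ F 0 := by
    refine AnalyticAt.fun_comp (g := u) (f := fun y => z0 + ι y) ?_
      (analyticAt_const.add (ι.analyticAt 0))
    simpa using hu z0 hz0
  have hF0 : F 0 = u z0 := by simp [hF]
  have hfd : ∀ y, fderiv ℝ F y = (fderiv ℝ u (z0 + ι y)).comp (ι : ℂ →L[ℝ] E2) := by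
    intro y
    have h1 := ι.comp_right_fderiv (f := fun w => u (z0 + w)) (x := y)
    rw [fderiv_comp_add_left] at h1
    exact h1
  have hsd : ∀ y h, fderiv ℝ (fderiv ℝ F) y h h =
      iteratedFDeriv ℝ 2 u (z0 + ι y) (fun _ => ι h) := by
    intro y h
    have h1 := iteratedFDeriv_two_apply (𝕜 := ℝ) F y (fun _ => h)
    rw [← h1]
    have h2 := ι.iteratedFDerivWithin_comp_right (fun w => u (z0 + w)) uniqueDiffOn_univ
      (x := y) (mem_univ _) 2
    rw [preimage_univ, iteratedFDerivWithin_univ, iteratedFDerivWithin_univ] at h2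
    have h3 : (fun w => u (z0 + w)) ∘ ι = F := rfl
    rw [h3, iteratedFDeriv_comp_add_left] at h2
    rw [h2]
    rfl
  have hlap : ∀ᶠ y in 𝓝 0, fderiv ℝ (fderiv ℝ F) y 1 1 +
      fderiv ℝ (fderiv ℝ F) y Complex.I Complex.I + lam * F y = 0 := by
    filter_upwards [hmap.eventually (hUo.mem_nhds hz0)] with y hy
    have := heq _ hy
    rw [hsd, hsd, hι1, hιI]
    simpa [lap, Fin.sum_univ_two] using this
  have hcrit' : fderiv ℝ F 0 = 0 := by rw [hfd]; simp [hcrit]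
  have key : ∀ᶠ y in 𝓝 0, fderiv ℝ F y = 0 → F y = F 0 := by
    by_cases h0 : F 0 = 0
    · have hne' : ¬ ∀ᶠ y in 𝓝 0, F y = 0 := by
        intro h
        obtain ⟨z, hz, hzne⟩ := hne
        apply hzne
        refine hu.eqOn_zero_of_preconnected_of_eventuallyEq_zero hUconn.isPreconnected hz0 ?_ hz
        filter_upwards [hmap'.eventually h] with w hw
        simpa [hF] using hw
      filter_upwards [aux_zero F hFan lam h0 hne' hlap] with y h1 h2
      rw [h1 h2]
    · have h1 := hlap.self_of_nhds
      by_cases h2 : fderiv ℝ (fderiv ℝ F) 0 1 1 = 0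
      · have h3 : fderiv ℝ (fderiv ℝ F) 0 Complex.I Complex.I ≠ 0 := by
          intro h3
          rw [h2, h3] at h1
          have : lam * F 0 = 0 := by linarith
          exact (mul_ne_zero hlam.ne' h0) this
        refine aux_ift F hFan hcrit' Complex.I Complex.reCLM (fun h hh => ⟨h.im, ?_⟩) h3
        apply Complex.ext
        · simpa using hh
        · simp
      · refine aux_ift F hFan hcrit' 1 Complex.imCLM (fun h hh => ⟨h.re, ?_⟩) h2
        apply Complex.ext
        · simp
        · simpa using hh
  filter_upwards [hmap'.eventually key] with z h1 h2
  have h3 : z0 + ι (ι.symm (z - z0)) = z := by simp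
  rw [hfd, h3, h2, hF0] at h1
  have h4 := h1 (by simp)
  simp only [hF] at h4
  rwa [h3] at h4

/-- The set of critical values of the eigenfunction `u` on `closure Ω` is finite. -/
theorem critical_values_finite
    (Ω U : Set E2) (hΩne : Ω.Nonempty) (hΩo : IsOpen Ω)
    (hΩb : Bornology.IsBounded Ω)
    (hUo : IsOpen U) (hUconn : IsConnected U) (hsub : closure Ω ⊆ U)
    (lam : ℝ) (hlam : 0 < lam)
    (u : E2 → ℝ) (hu : AnalyticOnNhd ℝ u U)
    (hne : ∃ z ∈ U, u z ≠ 0)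
    (heq : ∀ z ∈ U, lap u z + lam * u z = 0) :
    (u '' {z ∈ closure Ω | gradient u z = 0}).Finite := by
  have hloc := aux_local U hUo hUconn lam hlam u hu hne heq
  have hK : IsCompact (closure Ω) := hΩb.isCompact_closure
  obtain ⟨t, ht, hcov⟩ := hK.elim_nhds_subcover
    (fun z0 => {z | z0 ∈ U → fderiv ℝ u z = 0 → u z = u z0})
    (fun z0 hz0 => by
      filter_upwards [hloc z0 (hsub hz0)] with z hz _ using hz)
  refine (t.finite_toSet.image u).subset ?_
  rintro _ ⟨z, ⟨hz, hg⟩, rfl⟩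
  obtain ⟨z0, hz0, h⟩ := mem_iUnion₂.1 (hcov hz)
  refine ⟨z0, hz0, (h (hsub (ht z0 hz0)) ?_).symm⟩
  simpa [gradient] using hg
end
end

section
/- Let Ω, U, λ, u be as in the setting, and let z₀ ∈ Ω be a nonisolated critical point of u, i.e. ∇u(z₀) = 0 and for every ε > 0 there exists w ≠ z₀ with ‖w − z₀‖ < ε and ∇u(w) = 0. Then u(z₀) ≠ 0, and there exist r > 0, an open interval I containing 0, and an injective curve c : I → ℝ² that is real-analytic with c′(t) ≠ 0 for all t ∈ I and c(0) = z₀, such that every point of the image of c is a critical point of u, u is constantly equal to u(z₀) on the image of c, and every critical point of u lying in the open ball of radius r around z₀ belongs to the image of c. -/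
open Metric Set Filter Topology MeasureTheory

noncomputable section

/-- A real multilinear map on `ℂ` that is complex-linear in each variable. -/
lemma multilin_aux {m : ℕ} (M : MultilinearMap ℝ (fun _ : Fin m => ℂ) ℂ)
    (hM : ∀ (v : Fin m → ℂ) (j : Fin m) (w : ℂ),
      M (Function.update v j w) = w * M (Function.update v j 1)) (v : Fin m → ℂ) :
    M v = (∏ i, v i) * M (fun _ => 1) := by
  let N : MultilinearMap ℂ (fun _ : Fin m => ℂ) ℂ :=
    { toFun := M
      map_update_add' := fun v j x y => by
        have : (‹DecidableEq (Fin m)› : DecidableEq (Fin m)) = instDecidableEqFin m :=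
          Subsingleton.elim _ _
        subst this
        exact M.map_update_add v j x y
      map_update_smul' := fun v j c x => by
        have : (‹DecidableEq (Fin m)› : DecidableEq (Fin m)) = instDecidableEqFin m :=
          Subsingleton.elim _ _
        subst this
        rw [hM v j (c • x), hM v j x, smul_eq_mul, smul_eq_mul, mul_assoc] }
  have := N.map_smul_univ v (fun _ => 1)
  simpa [N] using this

lemma order_aux (v : ℂ → ℝ) (z₀ : ℂ) (lam : ℝ) (hv : AnalyticAt ℝ v z₀) (hv0 : v z₀ = 0)
    (hlap : ∀ᶠ z in 𝓝 z₀, iteratedFDeriv ℝ 2 v z (fun _ => 1) +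
      iteratedFDeriv ℝ 2 v z (fun _ => Complex.I) + lam * v z = 0)
    (hne : ¬ ∀ᶠ z in 𝓝 z₀, v z = 0) :
    ∀ᶠ z in 𝓝[≠] z₀, fderiv ℝ v z ≠ 0 := by
  let T : (ℂ →L[ℝ] ℝ) →L[ℝ] ℂ :=
    Complex.ofRealCLM ∘L (ContinuousLinearMap.apply ℝ ℝ (1:ℂ)) -
      Complex.I • (Complex.ofRealCLM ∘L (ContinuousLinearMap.apply ℝ ℝ Complex.I))
  have hT : ∀ L, T L = (L 1 : ℂ) - Complex.I * (L Complex.I : ℂ) := by intro L; simp [T]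
  let S : ℂ →L[ℝ] (ℂ →L[ℝ] ℝ) :=
    (ContinuousLinearMap.compL ℝ ℂ ℂ ℝ Complex.reCLM) ∘L (ContinuousLinearMap.mul ℝ ℂ)
  have hS : ∀ c w, S c w = (c * w).re := by intro c w; simp [S]
  let G : (ℂ →L[ℝ] ℂ) →L[ℝ] ℂ :=
    (ContinuousLinearMap.apply ℝ ℂ (1:ℂ)) + Complex.I • (ContinuousLinearMap.apply ℝ ℂ Complex.I)
  have hG : ∀ L, G L = L 1 + Complex.I * L Complex.I := by intro L; simp [G]
  have hST : ∀ L, S (T L) = L := by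
    intro L
    ext w
    rw [hS, hT]
    have : L w = w.re * L 1 + w.im * L Complex.I := by
      conv_lhs => rw [show w = w.re • (1:ℂ) + w.im • Complex.I by simp [Complex.re_add_im]]
      rw [map_add, map_smul, map_smul]; rfl
    rw [this]; simp; ring
  have hdv : AnalyticAt ℝ (fderiv ℝ v) z₀ := hv.fderiv
  let f : ℂ → ℂ := T ∘ fderiv ℝ v
  have hf : AnalyticAt ℝ f z₀ := (T.analyticAt _).comp hdv
  have hSf : S ∘ f = fderiv ℝ v := by funext z; exact hST _
  have hdf : AnalyticAt ℝ (fderiv ℝ f) z₀ := hf.fderiv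
  -- d-bar equation
  have hdbar : G ∘ fderiv ℝ f =ᶠ[𝓝 z₀] ((-lam) • Complex.ofRealCLM) ∘ v := by
    filter_upwards [hlap, hv.eventually_analyticAt] with z hz hvz
    have hd2 : HasFDerivAt (fderiv ℝ v) (fderiv ℝ (fderiv ℝ v) z) z :=
      hvz.fderiv.differentiableAt.hasFDerivAt
    have h1 : fderiv ℝ f z = T ∘L fderiv ℝ (fderiv ℝ v) z := (T.hasFDerivAt.comp z hd2).fderiv
    have hsymm : IsSymmSndFDerivAt ℝ v z := by
      apply ContDiffAt.isSymmSndFDerivAt (n := ⊤) hvz.contDiffAt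
      simp
    have hs := hsymm.eq 1 Complex.I
    rw [iteratedFDeriv_two_apply, iteratedFDeriv_two_apply] at hz
    simp only [Function.comp, hG, h1, ContinuousLinearMap.comp_apply, hT, hs]
    have hz' : (((fderiv ℝ (fderiv ℝ v) z) 1 1 : ℝ) : ℂ) +
      ((fderiv ℝ (fderiv ℝ v) z) Complex.I Complex.I : ℝ) + lam * v z = 0 := by
      exact_mod_cast hz
    simp
    linear_combination hz' - ((fderiv ℝ (fderiv ℝ v) z) Complex.I Complex.I : ℂ) * Complex.I_sq
  -- f not flat
  have hfne : ¬ ∀ᶠ z in 𝓝 z₀, f z = 0 := by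
    intro h
    apply hne
    have h1 : ∀ᶠ z in 𝓝 z₀, DifferentiableAt ℝ v z ∧ fderiv ℝ v z = 0 := by
      filter_upwards [h, hv.eventually_analyticAt] with z hz hvz
      refine ⟨hvz.differentiableAt, ?_⟩
      rw [← hSf]; simp [hz]
    obtain ⟨ε, hε, hb⟩ := Metric.eventually_nhds_iff_ball.1 h1
    filter_upwards [Metric.ball_mem_nhds z₀ hε] with z hz
    rw [← hv0]
    exact (convex_ball z₀ ε).is_const_of_fderivWithin_eq_zero (𝕜 := ℝ) (f := v)
      (fun x hx => (hb x hx).1.differentiableWithinAt)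
      (fun x hx => by
        rw [fderivWithin_of_isOpen isOpen_ball hx]; exact (hb x hx).2) hz (mem_ball_self hε)
  obtain ⟨p, R, hp⟩ := hf
  have hf : AnalyticAt ℝ f z₀ := ⟨p, R, hp⟩
  have hex : ∃ m, iteratedFDeriv ℝ m f z₀ ≠ 0 := by
    by_contra! hall
    apply hfne
    have h0 : ∀ y ∈ Metric.eball (0:ℂ) R, f (z₀ + y) = 0 := by
      intro y hy
      have := hp.hasSum_iteratedFDeriv hy
      simp only [hall] at this
      simpa using this.unique (by simp)
    filter_upwards [Metric.eball_mem_nhds z₀ hp.r_pos] with z hz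
    have := h0 (z - z₀) (by simpa [Metric.mem_eball, edist_eq_enorm_sub] using hz)
    simpa using this
  classical
  let m := Nat.find hex
  have hm : iteratedFDeriv ℝ m f z₀ ≠ 0 := Nat.find_spec hex
  have hlt : ∀ k < m, iteratedFDeriv ℝ k f z₀ = 0 := fun k hk => by
    by_contra h; exact Nat.find_min hex hk h
  have hvz : ∀ k < m, iteratedFDeriv ℝ k v z₀ = 0 := by
    intro k hk
    rcases k with _ | k
    · ext w; simp [hv0]
    · ext w
      rw [iteratedFDeriv_succ_apply_right]
      have : iteratedFDeriv ℝ k (fderiv ℝ v) z₀ = 0 := by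
        rw [← hSf, S.iteratedFDeriv_comp_left (n := (⊤ : WithTop ℕ∞)) hf.contDiffAt (by simp),
          hlt k (by omega)]
        ext; simp
      change iteratedFDeriv ℝ k (fderiv ℝ v) z₀ _ _ = _
      rw [this]; simp
  -- complex linearity
  have hCL : ∀ (w : Fin m → ℂ) (j : Fin m) (a : ℂ),
      iteratedFDeriv ℝ m f z₀ (Function.update w j a) =
        a * iteratedFDeriv ℝ m f z₀ (Function.update w j 1) := by
    generalize m = m at *
    rcases m with _ | k
    · intro w j; exact j.elim0
    have hk : ∀ w : Fin k → ℂ, G (iteratedFDeriv ℝ k (fderiv ℝ f) z₀ w) = 0 := by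
      intro w
      have h1 := G.iteratedFDeriv_comp_left (n := (⊤ : WithTop ℕ∞)) hdf.contDiffAt
        (i := k) (by simp)
      rw [(Filter.EventuallyEq.iteratedFDeriv ℝ hdbar k).eq_of_nhds, ContinuousLinearMap.iteratedFDeriv_comp_left
        (n := (⊤ : WithTop ℕ∞)) _ hv.contDiffAt (by simp), hvz k (by omega)] at h1
      have := congrArg (fun N => N w) h1
      simpa using this.symm
    have hlin : ∀ L : ℂ →L[ℝ] ℂ, G L = 0 → ∀ a, L a = a * L 1 := by
      intro L hL a
      rw [hG] at hL
      have hI : L Complex.I = Complex.I * L 1 := by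
        linear_combination (-Complex.I) * hL + L Complex.I * Complex.I_sq
      conv_lhs => rw [show a = a.re • (1:ℂ) + a.im • Complex.I by simp [Complex.re_add_im]]
      rw [map_add, map_smul, map_smul, hI]
      conv_rhs => rw [← Complex.re_add_im a]
      simp only [Complex.real_smul]; ring
    have hlast : ∀ (w : Fin (k+1) → ℂ) (a : ℂ),
        iteratedFDeriv ℝ (k+1) f z₀ (Function.update w (Fin.last k) a) =
        a * iteratedFDeriv ℝ (k+1) f z₀ (Function.update w (Fin.last k) 1) := by
      intro w a
      rw [iteratedFDeriv_succ_apply_right, iteratedFDeriv_succ_apply_right]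
      simp only [Function.update_self, Fin.init_update_last]
      exact hlin _ (hk _) a
    intro w j a
    have hperm : ∀ b, iteratedFDeriv ℝ (k+1) f z₀ (Function.update w j b) =
        iteratedFDeriv ℝ (k+1) f z₀
          (Function.update (w ∘ Equiv.swap j (Fin.last k)) (Fin.last k) b) := by
      intro b
      rw [← ContDiffAt.iteratedFDeriv_comp_perm hf.contDiffAt _ (Equiv.swap j (Fin.last k))]
      congr 1
      rw [Function.update_comp_equiv]
      simp
    rw [hperm, hperm, hlast]
  set A := iteratedFDeriv ℝ m f z₀ (fun _ => 1) with hA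
  have hform : ∀ w, iteratedFDeriv ℝ m f z₀ w = (∏ i, w i) * A :=
    fun w => multilin_aux (iteratedFDeriv ℝ m f z₀).toMultilinearMap hCL w
  have hA0 : A ≠ 0 := by
    intro h
    apply hm
    ext w
    rw [hform, h]; simp
  have hp0 : ∀ k < m, ∀ y, p k (fun _ => y) = 0 := by
    intro k hk y
    have := hp.factorial_smul y k
    rw [hlt k hk] at this
    simpa [Nat.factorial_ne_zero] using this
  have hpm : ∀ y : ℂ, (m.factorial : ℂ) * p m (fun _ => y) = y ^ m * A := by
    intro y
    have := hp.factorial_smul y m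
    rw [hform] at this
    simpa using this
  have hO := (HasFPowerSeriesOnBall.hasFPowerSeriesAt hp).isBigO_sub_partialSum_pow (m + 1)
  have hps : ∀ y, p.partialSum (m+1) y = p m (fun _ => y) := by
    intro y
    rw [FormalMultilinearSeries.partialSum, Finset.sum_range_succ, Finset.sum_eq_zero, zero_add]
    intro k hk
    exact hp0 k (Finset.mem_range.1 hk) y
  obtain ⟨C, hC⟩ := hO.bound
  have hev : ∀ᶠ y in 𝓝[≠] (0:ℂ), f (z₀ + y) ≠ 0 := by
    have hfac : (0:ℝ) < m.factorial := by exact_mod_cast Nat.factorial_pos m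
    have hsmall : ∀ᶠ y in 𝓝 (0:ℂ), C * m.factorial * ‖y‖ < ‖A‖ := by
      have : Continuous (fun y : ℂ => C * m.factorial * ‖y‖) := by fun_prop
      have h := this.tendsto 0
      refine h.eventually_lt_const ?_
      simpa using hA0
    filter_upwards [hC.filter_mono nhdsWithin_le_nhds, hsmall.filter_mono nhdsWithin_le_nhds,
      self_mem_nhdsWithin] with y h1 h2 h3 h4
    have h3' : 0 < ‖y‖ := norm_pos_iff.2 h3
    rw [h4, hps] at h1
    simp only [zero_sub, norm_neg, norm_pow, norm_norm] at h1
    have h5 := congrArg norm (hpm y)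
    simp only [norm_mul, norm_pow, Complex.norm_natCast] at h5
    have h6 : ‖y‖ ^ m * ‖A‖ ≤ ‖y‖ ^ m * (C * m.factorial * ‖y‖) := by
      rw [← h5]
      calc _ ≤ (m.factorial : ℝ) * (C * ‖y‖ ^ (m+1)) := by gcongr
        _ = _ := by ring
    have := le_of_mul_le_mul_left h6 (by positivity)
    linarith
  have hev' : ∀ᶠ z in 𝓝[≠] z₀, f z ≠ 0 := by
    rw [eventually_nhdsWithin_iff] at hev ⊢
    have ht : Tendsto (fun z => z - z₀) (𝓝 z₀) (𝓝 (0:ℂ)) := by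
      have : Continuous (fun z : ℂ => z - z₀) := by fun_prop
      simpa using this.tendsto z₀
    filter_upwards [ht.eventually hev] with z hz hzne
    have := hz (sub_ne_zero.2 hzne)
    simpa using this
  filter_upwards [hev'] with z hz h
  apply hz
  simp [f, h]

open scoped ContDiff in
lemma curve_aux (u : E2 → ℝ) (z₀ : E2) (hu : AnalyticAt ℝ u z₀) (hg : fderiv ℝ u z₀ = 0)
    (i j : Fin 2) (hij : i ≠ j)
    (hD : iteratedFDeriv ℝ 2 u z₀ (fun _ => EuclideanSpace.single i 1) ≠ 0)
    (hnon : ∃ᶠ w in 𝓝[≠] z₀, fderiv ℝ u w = 0) :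
    ∃ c : ℝ → E2, AnalyticAt ℝ c 0 ∧ c 0 = z₀ ∧ (∀ t, c t j = z₀ j + t) ∧
      (∀ᶠ t in 𝓝 (0:ℝ), fderiv ℝ u (c t) = 0) ∧
      (∀ᶠ w in 𝓝 z₀, fderiv ℝ u w = 0 → c (w j - z₀ j) = w) := by
  set ei : E2 := EuclideanSpace.single i 1 with hei
  set ej : E2 := EuclideanSpace.single j 1 with hej
  have hdec : ∀ v : E2, v = v j • ej + v i • ei := by
    intro v
    ext k
    fin_cases i <;> fin_cases j <;> fin_cases k <;> simp [hei, hej] at hij ⊢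
  set P : ℝ × ℝ → E2 := fun p => z₀ + p.1 • ej + p.2 • ei with hP
  have hP0 : P 0 = z₀ := by simp [hP]
  have hPan : ∀ p, AnalyticAt ℝ P p := by intro p; exact (analyticAt_const.add (analyticAt_fst.smul analyticAt_const)).add (analyticAt_snd.smul analyticAt_const)
  have hdu : AnalyticAt ℝ (fderiv ℝ u) z₀ := hu.fderiv
  set F : ℝ × ℝ → ℝ := fun p => fderiv ℝ u (P p) ei with hF
  have hFan : AnalyticAt ℝ F 0 := by
    have h1 : AnalyticAt ℝ (fun p => fderiv ℝ u (P p)) 0 :=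
      AnalyticAt.fun_comp (by rw [hP0]; exact hdu) (hPan 0)
    have := (ContinuousLinearMap.apply ℝ ℝ ei).analyticAt (fderiv ℝ u (P 0))
    exact AnalyticAt.fun_comp (f := fun p => fderiv ℝ u (P p)) this h1
  have hF0 : F 0 = 0 := by simp [hF, hP0, hg]
  have hcd : ContDiffAt ℝ ω F 0 := hFan.contDiffAt
  have hpart : (fderiv ℝ F 0) (0, 1) = iteratedFDeriv ℝ 2 u z₀ (fun _ => ei) := by
    have h1 : HasFDerivAt P ((ContinuousLinearMap.fst ℝ ℝ ℝ).smulRight ej +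
        (ContinuousLinearMap.snd ℝ ℝ ℝ).smulRight ei) 0 := by
      have := (((ContinuousLinearMap.fst ℝ ℝ ℝ).smulRight ej +
        (ContinuousLinearMap.snd ℝ ℝ ℝ).smulRight ei).hasFDerivAt (x := (0 : ℝ × ℝ))).const_add z₀
      have hPe : P = fun x => z₀ + ((ContinuousLinearMap.fst ℝ ℝ ℝ).smulRight ej +
          (ContinuousLinearMap.snd ℝ ℝ ℝ).smulRight ei) x := by
        funext p; simp [hP, add_assoc]
      rw [hPe]; exact this
    have h2 : HasFDerivAt (fderiv ℝ u) (fderiv ℝ (fderiv ℝ u) z₀) (P 0) := by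
      rw [hP0]; exact hdu.differentiableAt.hasFDerivAt
    have h3 := (h2.comp 0 h1).clm_apply (hasFDerivAt_const ei (0 : ℝ × ℝ))
    have h4 : fderiv ℝ F 0 = _ := h3.fderiv
    rw [h4, iteratedFDeriv_two_apply]
    simp
  have hinv : (fderiv ℝ F 0 ∘L .inr ℝ ℝ ℝ).IsInvertible := by
    have hne : (fderiv ℝ F 0) (0, 1) ≠ 0 := by rw [hpart]; exact hD
    refine ⟨ContinuousLinearEquiv.unitsEquivAut ℝ (Units.mk0 _ hne), ?_⟩
    ext
    simp
  set ψ := hcd.implicitFunction (by simp) hinv with hψ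
  have hψ0 : ψ 0 = 0 := hcd.implicitFunction_apply_self (by simp) hinv
  have hψan : AnalyticAt ℝ ψ 0 := (hcd.contDiffAt_implicitFunction (by simp) hinv).analyticAt
  have hψ1 : ∀ᶠ t in 𝓝 (0:ℝ), F (t, ψ t) = 0 := by
    have := hcd.eventually_apply_implicitFunction (by simp) hinv
    rw [hF0] at this; exact this
  have hψ2 : ∀ᶠ p in 𝓝 (0:ℝ × ℝ), F p = 0 ↔ ψ p.1 = p.2 := by
    have := hcd.eventually_apply_eq_iff_implicitFunction (by simp) hinv
    rw [hF0] at this; exact this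
  set c : ℝ → E2 := fun t => P (t, ψ t) with hc
  have hc0 : c 0 = z₀ := by simp [hc, hψ0, hP]
  have hcan : AnalyticAt ℝ c 0 := by
    simp only [hc, hP]; fun_prop
  have hcj : ∀ t, c t j = z₀ j + t := by
    intro t; simp [hc, hP, hei, hej, hij.symm]
  have hloc : ∀ᶠ w in 𝓝 z₀, fderiv ℝ u w = 0 → c (w j - z₀ j) = w := by
    have ht : Tendsto (fun w : E2 => (w j - z₀ j, w i - z₀ i)) (𝓝 z₀) (𝓝 (0 : ℝ × ℝ)) := by
      have : Continuous (fun w : E2 => (w j - z₀ j, w i - z₀ i)) := by fun_prop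
      have h := this.tendsto z₀
      simp only [sub_self] at h
      exact h
    filter_upwards [ht.eventually hψ2] with w hw hcr
    have hPw : P (w j - z₀ j, w i - z₀ i) = w := by
      have := hdec (w - z₀)
      simp only [hP]
      rw [add_assoc]
      simp only [PiLp.sub_apply] at this
      rw [← this]; simp
    have : ψ (w j - z₀ j) = w i - z₀ i := hw.1 (by simp only [hF]; rw [hPw, hcr]; simp)
    simp only [hc]
    rw [this, hPw]
  refine ⟨c, hcan, hc0, hcj, ?_, hloc⟩
  set h : ℝ → ℝ := fun t => fderiv ℝ u (c t) ej with hh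
  have hhan : AnalyticAt ℝ h 0 := by
    have h1 : AnalyticAt ℝ (fun p => fderiv ℝ u (c p)) 0 :=
      AnalyticAt.fun_comp (by rw [hc0]; exact hdu) hcan
    have := (ContinuousLinearMap.apply ℝ ℝ ej).analyticAt (fderiv ℝ u (c 0))
    exact AnalyticAt.fun_comp (f := fun p => fderiv ℝ u (c p)) this h1
  have hfreq : ∃ᶠ t in 𝓝[≠] (0:ℝ), h t = 0 := by
    have hw : ∃ᶠ w in 𝓝[≠] z₀, h (w j - z₀ j) = 0 ∧ w j - z₀ j ≠ 0 := by
      refine (hnon.and_eventually ((hloc.filter_mono nhdsWithin_le_nhds).and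
        self_mem_nhdsWithin)).mono ?_
      rintro w ⟨hcr, hl, hne⟩
      have hl' := hl hcr
      refine ⟨by simp only [hh]; rw [hl', hcr]; simp, fun h0 => hne ?_⟩
      rw [h0, hc0] at hl'; exact hl'.symm
    have ht : Tendsto (fun w : E2 => w j - z₀ j) (𝓝[≠] z₀) (𝓝 (0 : ℝ)) := by
      have : Continuous (fun w : E2 => w j - z₀ j) := by fun_prop
      have := this.tendsto z₀
      simp only [sub_self] at this
      exact this.mono_left nhdsWithin_le_nhds
    have := ht.frequently (p := fun t => h t = 0 ∧ t ≠ 0) hw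
    rw [frequently_nhdsWithin_iff]
    exact this
  have hzero : ∀ᶠ t in 𝓝 (0:ℝ), h t = 0 :=
    hhan.frequently_zero_iff_eventually_zero.1 hfreq
  filter_upwards [hzero, hψ1] with t h1 h2
  ext v
  rw [hdec v]
  simp only [map_add, map_smul]
  have h1' : fderiv ℝ u (c t) ej = 0 := h1
  have h2' : fderiv ℝ u (c t) ei = 0 := h2
  rw [h1', h2']; simp

/-- A nonisolated critical point of `u` in `Ω` has nonzero value and lies on a simple
analytic curve of critical points along which `u` is constant, and which locally
contains all critical points of `u`. -/
theorem nonisolated_critical_point_on_analytic_curve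
    (Ω U : Set E2) (hΩne : Ω.Nonempty) (hΩo : IsOpen Ω)
    (hΩb : Bornology.IsBounded Ω)
    (hUo : IsOpen U) (hUconn : IsConnected U) (hsub : closure Ω ⊆ U)
    (lam : ℝ) (hlam : 0 < lam)
    (u : E2 → ℝ) (hu : AnalyticOnNhd ℝ u U)
    (hne : ∃ z ∈ U, u z ≠ 0)
    (heq : ∀ z ∈ U, lap u z + lam * u z = 0)
    (z₀ : E2) (hz₀ : z₀ ∈ Ω) (hg0 : gradient u z₀ = 0)
    (hnoniso : ∀ ε > 0, ∃ w, w ≠ z₀ ∧ ‖w - z₀‖ < ε ∧ gradient u w = 0) :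
    u z₀ ≠ 0 ∧
      ∃ r > 0, ∃ a b : ℝ, a < 0 ∧ 0 < b ∧
        ∃ c : ℝ → E2,
          AnalyticOnNhd ℝ c (Ioo a b) ∧
          (∀ t ∈ Ioo a b, deriv c t ≠ 0) ∧
          InjOn c (Ioo a b) ∧
          c 0 = z₀ ∧
          (∀ t ∈ Ioo a b, gradient u (c t) = 0) ∧
          (∀ t ∈ Ioo a b, u (c t) = u z₀) ∧
          (∀ w ∈ ball z₀ r, gradient u w = 0 → w ∈ c '' Ioo a b) := by
  have hzU : z₀ ∈ U := hsub (subset_closure hz₀)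
  have hgr : ∀ w, gradient u w = 0 ↔ fderiv ℝ u w = 0 := by
    intro w; simp [gradient]
  have huz : AnalyticAt ℝ u z₀ := hu z₀ hzU
  have hnon : ∃ᶠ w in 𝓝[≠] z₀, fderiv ℝ u w = 0 := by
    rw [frequently_nhdsWithin_iff, Metric.nhds_basis_ball.frequently_iff]
    intro ε hε
    obtain ⟨w, hw1, hw2, hw3⟩ := hnoniso ε hε
    exact ⟨w, by simpa [dist_eq_norm] using hw2, (hgr w).1 hw3, hw1⟩
  have hu0 : u z₀ ≠ 0 := by
    intro h0
    let e : ℂ ≃L[ℝ] E2 := Complex.orthonormalBasisOneI.repr.toContinuousLinearEquiv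
    have he1 : e 1 = EuclideanSpace.single 0 1 := by
      ext k; fin_cases k <;> simp [e]
    have heI : e Complex.I = EuclideanSpace.single 1 1 := by
      ext k; fin_cases k <;> simp [e]
    have hez : e (e.symm z₀) = z₀ := e.apply_symm_apply z₀
    have hcont : Tendsto e (𝓝 (e.symm z₀)) (𝓝 z₀) := by
      have := e.continuous.tendsto (e.symm z₀)
      rwa [hez] at this
    have hfd : ∀ z, fderiv ℝ (u ∘ e) z = (fderiv ℝ u (e z)) ∘L (e : ℂ →L[ℝ] E2) :=
      fun z => e.comp_right_fderiv
    have key := order_aux (u ∘ e) (e.symm z₀) lam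
      (AnalyticAt.comp (f := e) (by rw [hez]; exact huz) ((e : ℂ →L[ℝ] E2).analyticAt _))
      (by simp [h0])
      (by
        filter_upwards [hcont.eventually (hUo.mem_nhds hzU)] with z hz
        have := heq (e z) hz
        have h2 : ∀ w, iteratedFDeriv ℝ 2 (u ∘ e) z (fun _ => w) =
            iteratedFDeriv ℝ 2 u (e z) (fun _ => e w) := by
          intro w
          have h3 := e.iteratedFDerivWithin_comp_right u (s := univ) uniqueDiffOn_univ
            (x := z) (mem_univ _) 2
          simp only [preimage_univ, iteratedFDerivWithin_univ] at h3
          rw [h3]; rfl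
        rw [h2, h2, he1, heI]
        simpa [lap, Fin.sum_univ_two] using this)
      (by
        intro hev
        have hev' : ∀ᶠ z in 𝓝 z₀, u z = 0 := by
          have ht : Tendsto e.symm (𝓝 z₀) (𝓝 (e.symm z₀)) := e.symm.continuous.tendsto _
          filter_upwards [ht.eventually hev] with z hz
          simpa using hz
        obtain ⟨z, hz, hz'⟩ := hne
        exact hz' (hu.eqOn_zero_of_preconnected_of_eventuallyEq_zero hUconn.isPreconnected
          hzU hev' hz))
    have ht : Tendsto e.symm (𝓝[≠] z₀) (𝓝[≠] (e.symm z₀)) :=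
      tendsto_nhdsWithin_of_tendsto_nhds_of_eventually_within _
        ((e.symm.continuous.tendsto _).mono_left nhdsWithin_le_nhds)
        (by
          filter_upwards [self_mem_nhdsWithin] with w hw h
          exact hw (e.symm.injective h))
    obtain ⟨w, hw1, hw2⟩ := (hnon.and_eventually (ht.eventually key)).exists
    apply hw2
    rw [hfd, e.apply_symm_apply, hw1]
    simp
  refine ⟨hu0, ?_⟩
  have hg0' := (hgr z₀).1 hg0
  obtain ⟨i, j, hij, hD⟩ : ∃ i j : Fin 2, i ≠ j ∧
      iteratedFDeriv ℝ 2 u z₀ (fun _ => EuclideanSpace.single i 1) ≠ 0 := by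
    by_contra! hall
    have h1 := hall 0 1 (by decide)
    have h2 := hall 1 0 (by decide)
    have h3 := heq z₀ hzU
    rw [lap, Fin.sum_univ_two, h1, h2] at h3
    have : lam * u z₀ ≠ 0 := mul_ne_zero hlam.ne' hu0
    apply this; linarith
  obtain ⟨c, hcan, hc0, hcj, hcrit, hloc⟩ := curve_aux u z₀ huz hg0' i j hij hD hnon
  have hcU : ∀ᶠ t in 𝓝 (0:ℝ), c t ∈ U := by
    apply hcan.continuousAt.eventually
    rw [hc0]; exact hUo.mem_nhds hzU
  obtain ⟨δ, hδ, hall⟩ := Metric.eventually_nhds_iff_ball.1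
    ((hcan.eventually_analyticAt.and hcrit).and hcU)
  rw [Real.ball_eq_Ioo, zero_sub, zero_add] at hall
  have hjw : ∀ᶠ w in 𝓝 z₀, w j - z₀ j ∈ Ioo (-δ) δ := by
    have hc : Continuous (fun w : E2 => w j - z₀ j) := by fun_prop
    have ht := hc.tendsto z₀
    simp only [sub_self] at ht
    exact ht.eventually (Ioo_mem_nhds (by linarith) hδ)
  obtain ⟨r, hr, hrall⟩ := Metric.eventually_nhds_iff_ball.1 (hloc.and hjw)
  have hd : ∀ t ∈ Ioo (-δ) δ, HasDerivAt (u ∘ c) 0 t := by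
    intro t ht
    have h1 := (hu _ (hall t ht).2).differentiableAt.hasFDerivAt
    have h2 := (hall t ht).1.1.differentiableAt.hasDerivAt
    have h3 := h1.comp_hasDerivAt t h2
    rw [(hall t ht).1.2] at h3
    simpa using h3
  refine ⟨r, hr, -δ, δ, by linarith, hδ, c, fun t ht => (hall t ht).1.1, ?_, ?_, hc0,
    fun t ht => (hgr _).2 (hall t ht).1.2, ?_, ?_⟩
  · intro t ht h0
    have h2 := (hall t ht).1.1.differentiableAt.hasDerivAt
    rw [h0] at h2
    have h3 := (EuclideanSpace.proj j : E2 →L[ℝ] ℝ).hasFDerivAt.comp_hasDerivAt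
      t h2
    have h4 : HasDerivAt (fun s : ℝ => z₀ j + s) 1 t := (hasDerivAt_id t).const_add _
    have h5 : (EuclideanSpace.proj j : E2 →L[ℝ] ℝ) ∘ c =
        fun s : ℝ => z₀ j + s := by
      funext s; exact hcj s
    rw [h5] at h3
    have := h4.unique h3
    simp at this
  · intro s _ t _ hst
    have := hcj s
    rw [hst, hcj t] at this
    linarith
  · intro t ht
    have h0 : (0:ℝ) ∈ Ioo (-δ) δ := ⟨by linarith, hδ⟩
    have := isOpen_Ioo.is_const_of_deriv_eq_zero (f := u ∘ c) isPreconnected_Ioo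
      (fun s hs => (hd s hs).differentiableAt.differentiableWithinAt)
      (fun s hs => (hd s hs).deriv) ht h0
    simpa [hc0] using this
  · intro w hw hcr
    exact ⟨w j - z₀ j, (hrall w hw).2, (hrall w hw).1 ((hgr w).1 hcr)⟩
end
end

section
/- Let Ω, U, λ, u be as in the setting. If A ⊆ closure(Ω) is a connected set containing at least two points such that every point of A is a critical point of u, then u is constant on A and u(z) ≠ 0 for every z ∈ A. -/
open Metric Set Filter Topology MeasureTheory

noncomputable section

/-- Directional derivative. -/
def dirD (v : E2) (f : E2 → ℝ) : E2 → ℝ := fun z => fderiv ℝ f z v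

theorem dirD_analyticAt {f : E2 → ℝ} {z : E2} (v : E2) (hf : AnalyticAt ℝ f z) :
    AnalyticAt ℝ (dirD v f) z :=
  ((ContinuousLinearMap.apply ℝ ℝ v).analyticAt _).comp hf.fderiv

theorem dirD_analytic {f : E2 → ℝ} {U : Set E2} (v : E2) (hf : AnalyticOnNhd ℝ f U) :
    AnalyticOnNhd ℝ (dirD v f) U := fun z hz => dirD_analyticAt v (hf z hz)

theorem dirD_dirD {f : E2 → ℝ} {z : E2} (v w : E2) (hf : AnalyticAt ℝ f z) :
    dirD v (dirD w f) z = fderiv ℝ (fderiv ℝ f) z v w := by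
  have h : HasFDerivAt (dirD w f)
      ((ContinuousLinearMap.apply ℝ ℝ w).comp (fderiv ℝ (fderiv ℝ f) z)) z :=
    (ContinuousLinearMap.apply ℝ ℝ w).hasFDerivAt.comp z hf.fderiv.differentiableAt.hasFDerivAt
  show fderiv ℝ (dirD w f) z v = _
  rw [h.fderiv]
  rfl

theorem dirD_comm {f : E2 → ℝ} {z : E2} (v w : E2) (hf : AnalyticAt ℝ f z) :
    dirD v (dirD w f) z = dirD w (dirD v f) z := by
  rw [dirD_dirD _ _ hf, dirD_dirD _ _ hf]
  exact (hf.contDiffAt (n := 2)).isSymmSndFDerivAt (by simp) v w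

theorem dirD_congr {f g : E2 → ℝ} {U : Set E2} (hU : IsOpen U) (v : E2) (h : EqOn f g U) :
    EqOn (dirD v f) (dirD v g) U := by
  intro z hz
  have : f =ᶠ[𝓝 z] g := h.eventuallyEq_of_mem (hU.mem_nhds hz)
  simp only [dirD, this.fderiv_eq]

theorem dirD_iter_congr {U : Set E2} (hU : IsOpen U) (v : E2) (n : ℕ) :
    ∀ {f g : E2 → ℝ}, EqOn f g U → EqOn ((dirD v)^[n] f) ((dirD v)^[n] g) U := by
  induction n with
  | zero => intro f g h; exact h
  | succ n ih => intro f g h; exact ih (dirD_congr hU v h)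

/-- Vanishing to order `n` at `z0`. -/
def Van (z0 t e : E2) : ℕ → (E2 → ℝ) → Prop
  | 0, _ => True
  | n + 1, f => f z0 = 0 ∧ Van z0 t e n (dirD t f) ∧ Van z0 t e n (dirD e f)

theorem Van.mono {z0 t e : E2} (n : ℕ) : ∀ {f : E2 → ℝ}, Van z0 t e (n+1) f → Van z0 t e n f := by
  induction n with
  | zero => intro f h; trivial
  | succ n ih => intro f h; exact ⟨h.1, ih h.2.1, ih h.2.2⟩

theorem Van.iter {z0 t e : E2} (n : ℕ) :
    ∀ {f : E2 → ℝ}, Van z0 t e (n+1) f → (dirD t)^[n] f z0 = 0 := by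
  induction n with
  | zero => intro f h; exact h.1
  | succ n ih => intro f h; exact ih h.2.1

theorem dirD_iter_lin {U : Set E2} (hU : IsOpen U) (v : E2) (c : ℝ) (n : ℕ) :
    ∀ {f g : E2 → ℝ}, AnalyticOnNhd ℝ f U → AnalyticOnNhd ℝ g U →
      EqOn ((dirD v)^[n] (fun z => c * f z - g z))
        (fun z => c * (dirD v)^[n] f z - (dirD v)^[n] g z) U := by
  induction n with
  | zero => intro f g hf hg z hz; rfl
  | succ n ih =>
    intro f g hf hg z hz
    have h1 : EqOn (dirD v (fun z => c * f z - g z)) (fun z => c * dirD v f z - dirD v g z) U := by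
      intro y hy
      have := (((hf y hy).differentiableAt.hasFDerivAt.const_mul c).sub
        (hg y hy).differentiableAt.hasFDerivAt).fderiv
      simp only [dirD]
      erw [this]
      simp
    have h2 := dirD_iter_congr hU v n h1 hz
    have h3 := ih (dirD_analytic v hf) (dirD_analytic v hg) hz
    simp only [Function.iterate_succ, Function.comp]
    rw [h2, h3]

theorem van_step {U : Set E2} (hU : IsOpen U) {z0 t e : E2} (hz0 : z0 ∈ U) (lam : ℝ) (n : ℕ) :
    ∀ {f : E2 → ℝ}, AnalyticOnNhd ℝ f U →
      EqOn (dirD e (dirD e f)) (fun z => (-lam) * f z - dirD t (dirD t f) z) U →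
      Van z0 t e (n+1) f → (dirD t)^[n] (dirD t f) z0 = 0 → (dirD t)^[n] (dirD e f) z0 = 0 →
      Van z0 t e (n+2) f := by
  induction n with
  | zero =>
    intro f hf h hv h1 h2
    exact ⟨hv.1, ⟨h1, trivial, trivial⟩, ⟨h2, trivial, trivial⟩⟩
  | succ n ih =>
    intro f hf h hv h1 h2
    have hcomm : ∀ g, AnalyticOnNhd ℝ g U → ∀ v w, EqOn (dirD v (dirD w g)) (dirD w (dirD v g)) U :=
      fun g hg v w z hz => dirD_comm v w (hg z hz)
    have key : ∀ v, EqOn (dirD e (dirD e (dirD v f)))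
        (fun z => (-lam) * dirD v f z - dirD t (dirD t (dirD v f)) z) U := by
      intro v z hz
      have a1 := dirD_congr hU e (hcomm f hf e v) hz
      have a2 := hcomm _ (dirD_analytic e hf) e v hz
      have a3 := dirD_congr hU v h hz
      have a4 := dirD_iter_lin hU v (-lam) 1 hf (dirD_analytic t (dirD_analytic t hf)) hz
      have b1 := dirD_congr hU t (hcomm f hf t v) hz
      have b2 := hcomm _ (dirD_analytic t hf) t v hz
      simp only [Function.iterate_one] at a4
      rw [a1, a2, a3, a4]
      simp only
      rw [b1, b2]
    refine ⟨hv.1, ?_, ?_⟩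
    · refine ih (dirD_analytic t hf) (key t) hv.2.1 h1 ?_
      rw [dirD_iter_congr hU t n (hcomm f hf e t) hz0]
      exact h2
    · refine ih (dirD_analytic e hf) (key e) hv.2.2 h2 ?_
      rw [dirD_iter_congr hU t n h hz0,
        dirD_iter_lin hU t (-lam) n hf (dirD_analytic t (dirD_analytic t hf)) hz0]
      have := Van.iter n (Van.mono _ hv)
      simp only [this]
      have h1' : (dirD t)^[n] (dirD t (dirD t f)) z0 = 0 := h1
      rw [h1']; ring

theorem iter_succ {f : E2 → ℝ} {z : E2} (hf : AnalyticAt ℝ f z) (n : ℕ) (m : Fin n → E2) (v : E2) :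
    iteratedFDeriv ℝ n (fun y => fderiv ℝ f y) z m v = iteratedFDeriv ℝ n (dirD v f) z m := by
  have h := ContinuousLinearMap.iteratedFDeriv_comp_left (n := n) (i := n)
    (ContinuousLinearMap.apply ℝ ℝ v) (hf.fderiv.contDiffAt) le_rfl
  have h' : iteratedFDeriv ℝ n (dirD v f) z = _ := h
  rw [h']; rfl

theorem iter_diag (t : E2) (n : ℕ) : ∀ {f : E2 → ℝ} {z : E2}, AnalyticAt ℝ f z →
    iteratedFDeriv ℝ n f z (fun _ => t) = (dirD t)^[n] f z := by
  induction n with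
  | zero => intro f z hf; simp
  | succ n ih =>
    intro f z hf
    rw [iteratedFDeriv_succ_apply_right, iter_succ hf]
    exact ih (dirD_analyticAt t hf)

theorem van_iter {z0 t e : E2} (hb : ∀ v : E2, ∃ a b : ℝ, v = a • t + b • e) (n : ℕ) :
    ∀ {f : E2 → ℝ}, AnalyticAt ℝ f z0 → Van z0 t e n f → ∀ j < n, iteratedFDeriv ℝ j f z0 = 0 := by
  induction n with
  | zero => intro f _ _ j hj; omega
  | succ n ih =>
    intro f hf hv j hj
    ext m
    cases j with
    | zero => simpa using hv.1
    | succ j =>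
      rw [iteratedFDeriv_succ_apply_right]
      obtain ⟨a, b, h⟩ := hb (m (Fin.last j))
      rw [h, map_add, map_smul, map_smul, iter_succ hf, iter_succ hf,
        ih (dirD_analyticAt t hf) hv.2.1 j (by omega),
        ih (dirD_analyticAt e hf) hv.2.2 j (by omega)]
      simp

theorem taylor_dir {G : E2 → ℝ} {z0 t : E2} (hG : AnalyticAt ℝ G z0) (n : ℕ)
    (hj : ∀ j < n, iteratedFDeriv ℝ j G z0 = 0) (h : ℕ → E2) (h0 : ∀ k, h k ≠ 0)
    (hl : Tendsto h atTop (𝓝 0)) (ht : Tendsto (fun k => ‖h k‖⁻¹ • h k) atTop (𝓝 t))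
    (hz : ∀ k, G (z0 + h k) = 0) : iteratedFDeriv ℝ n G z0 (fun _ => t) = 0 := by
  obtain ⟨p, r, hp⟩ := hG
  have hp0 : ∀ j < n, ∀ y : E2, p j (fun _ => y) = 0 := by
    intro j hjn y
    have := hp.factorial_smul y j
    rw [hj j hjn] at this
    simpa [Nat.factorial_ne_zero] using this
  rw [← hp.factorial_smul t n]
  have hO := (hp.hasFPowerSeriesAt.isBigO_sub_partialSum_pow (n+1)).comp_tendsto hl
  obtain ⟨C, hC⟩ := hO.bound
  have hps : ∀ y, p.partialSum (n+1) y = p n (fun _ => y) := by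
    intro y
    rw [FormalMultilinearSeries.partialSum, Finset.sum_range_succ,
      Finset.sum_eq_zero (fun j hj' => hp0 j (Finset.mem_range.1 hj') y), zero_add]
  have h1 : Tendsto (fun k => p n (fun _ => ‖h k‖⁻¹ • h k)) atTop (𝓝 (p n (fun _ => t))) := by
    have hc : Continuous (fun y : E2 => p n (fun _ => y)) :=
      (p n).cont.comp (continuous_pi fun _ => continuous_id)
    exact (hc.tendsto t).comp ht
  have h2 : Tendsto (fun k => p n (fun _ => ‖h k‖⁻¹ • h k)) atTop (𝓝 0) := by
    have h3 : Tendsto (fun k => C * ‖h k‖) atTop (𝓝 0) := by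
      simpa using hl.norm.const_mul C
    refine squeeze_zero_norm' ?_ h3
    filter_upwards [hC] with k hk
    simp only [Function.comp, hz, hps, zero_sub, norm_neg, norm_pow, norm_norm] at hk
    have hpos : 0 < ‖h k‖ := norm_pos_iff.2 (h0 k)
    have : p n (fun _ => ‖h k‖⁻¹ • h k) = (‖h k‖⁻¹)^n * p n (fun _ => h k) := by
      have := (p n).map_smul_univ (fun _ => ‖h k‖⁻¹) (fun _ => h k)
      simpa using this
    rw [this, norm_mul, norm_pow, norm_inv, norm_norm]
    calc _ ≤ (‖h k‖⁻¹)^n * (C * ‖h k‖^(n+1)) := by gcongr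
      _ = C * ‖h k‖ := by rw [inv_pow, pow_succ]; field_simp
  rw [tendsto_nhds_unique h1 h2, smul_zero]

theorem lap_eq {f : E2 → ℝ} {z : E2} (a b : ℝ) (hab : a^2 + b^2 = 1) (hf : AnalyticAt ℝ f z) :
    lap f z = dirD (!₂[a, b]) (dirD (!₂[a, b]) f) z + dirD (!₂[-b, a]) (dirD (!₂[-b, a]) f) z := by
  have h1 : (!₂[a, b] : E2) = a • EuclideanSpace.single 0 1 + b • EuclideanSpace.single 1 1 := by
    ext i; fin_cases i <;> simp
  have h2 : (!₂[-b, a] : E2) = (-b) • EuclideanSpace.single 0 1 + a • EuclideanSpace.single 1 1 := by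
    ext i; fin_cases i <;> simp
  rw [dirD_dirD _ _ hf, dirD_dirD _ _ hf, lap, Fin.sum_univ_two, iteratedFDeriv_two_apply,
    iteratedFDeriv_two_apply, h1, h2]
  simp only [map_add, map_smul, add_apply, smul_apply, smul_eq_mul]
  linear_combination (-(fderiv ℝ (fderiv ℝ f) z (EuclideanSpace.single 0 1) (EuclideanSpace.single 0 1))
    - (fderiv ℝ (fderiv ℝ f) z (EuclideanSpace.single 1 1) (EuclideanSpace.single 1 1))) * hab

theorem no_zero_acc {U : Set E2} (hU : IsOpen U) (hUc : IsPreconnected U) {u : E2 → ℝ}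
    (hu : AnalyticOnNhd ℝ u U) (lam : ℝ) (heq : ∀ z ∈ U, lap u z + lam * u z = 0)
    {z0 : E2} (hz0 : z0 ∈ U) (h0 : u z0 = 0) (h : ℕ → E2) (hne : ∀ k, h k ≠ 0)
    (hl : Tendsto h atTop (𝓝 0)) (hc : ∀ k, fderiv ℝ u (z0 + h k) = 0) : EqOn u 0 U := by
  obtain ⟨t, htS, φ, hφ, ht⟩ := (isCompact_sphere (0 : E2) 1).tendsto_subseq
    (x := fun k => ‖h k‖⁻¹ • h k) (by
      intro k
      simp [norm_smul, hne k])
  have ht1 : t 0 ^ 2 + t 1 ^ 2 = 1 := by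
    have : ‖t‖ = 1 := by simpa using htS
    have h2 := EuclideanSpace.norm_sq_eq t
    rw [this] at h2
    simp [Fin.sum_univ_two] at h2
    linarith
  have htt : t = !₂[t 0, t 1] := by ext i; fin_cases i <;> simp
  set e : E2 := !₂[-t 1, t 0] with he
  have hb : ∀ v : E2, ∃ a b : ℝ, v = a • t + b • e := by
    intro v
    refine ⟨v 0 * t 0 + v 1 * t 1, -v 0 * t 1 + v 1 * t 0, ?_⟩
    ext i
    fin_cases i
    · simp [he]; linear_combination (-v 0) * ht1
    · simp [he]; linear_combination (-v 1) * ht1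
  have hpde : EqOn (dirD e (dirD e u)) (fun z => (-lam) * u z - dirD t (dirD t u) z) U := by
    intro z hz
    have h1 := lap_eq (t 0) (t 1) ht1 (hu z hz)
    rw [← htt, ← he] at h1
    have h2 := heq z hz
    simp only
    linarith
  have hdir : ∀ n w, (∀ j < n, iteratedFDeriv ℝ j (dirD w u) z0 = 0) →
      (dirD t)^[n] (dirD w u) z0 = 0 := by
    intro n w hj
    rw [← iter_diag t n (dirD_analytic w hu z0 hz0)]
    refine taylor_dir (dirD_analytic w hu z0 hz0) n hj (h ∘ φ) (fun k => hne _)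
      (hl.comp hφ.tendsto_atTop) ht ?_
    intro k
    simp [dirD, hc]
  have hvan : ∀ n, Van z0 t e (n+1) u := by
    intro n
    induction n with
    | zero => exact ⟨h0, trivial, trivial⟩
    | succ n ih =>
      exact van_step hU hz0 lam n hu hpde ih
        (hdir n t (van_iter hb n (dirD_analytic t hu z0 hz0) ih.2.1))
        (hdir n e (van_iter hb n (dirD_analytic e hu z0 hz0) ih.2.2))
  refine hu.eqOn_zero_of_preconnected_of_eventuallyEq_zero hUc hz0 ?_
  obtain ⟨p, r, hp⟩ := hu z0 hz0
  have : ∀ᶠ z in 𝓝 z0, z ∈ Metric.eball z0 r := Metric.eball_mem_nhds z0 hp.r_pos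
  filter_upwards [this] with z hz
  have h1 := hp.hasSum_iteratedFDeriv (y := z - z0) (by
    simpa [Metric.mem_eball, edist_eq_enorm_sub] using hz)
  have h2 : ∀ n, iteratedFDeriv ℝ n u z0 = 0 := fun n =>
    van_iter hb (n+1) (hu z0 hz0) (hvan n) n (by omega)
  simp only [h2] at h1
  simp only [zero_apply, smul_zero, add_sub_cancel] at h1
  exact h1.unique hasSum_zero

theorem local_sard {u : E2 → ℝ} {z0 : E2} (i j : Fin 2) (hij : ∀ k : Fin 2, k = i ∨ k = j) (hne : i ≠ j)
    (hu : AnalyticAt ℝ u z0)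
    (hD : fderiv ℝ (fderiv ℝ u) z0 (EuclideanSpace.single i 1) (EuclideanSpace.single i 1) ≠ 0) :
    ∃ V ∈ 𝓝 z0, volume (u '' {z | z ∈ V ∧ fderiv ℝ u z = 0}) = 0 := by
  set ei : E2 := EuclideanSpace.single i 1
  set ej : E2 := EuclideanSpace.single j 1
  set g := dirD ei u with hg
  have hga : AnalyticAt ℝ g z0 := dirD_analyticAt _ hu
  set L := fderiv ℝ g z0 with hL
  have ha : L ei ≠ 0 := by
    have := dirD_dirD ei ei hu
    rw [← this] at hD
    exact hD
  have hdec : ∀ w : E2, w = w i • ei + w j • ej := by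
    intro w; ext k
    rcases hij k with rfl | rfl <;> simp [ei, ej, hne, hne.symm]
  have hei : ‖ei‖ = 1 := by simp [ei]
  have hej : ‖ej‖ = 1 := by simp [ej]
  have hapos : 0 < |L ei| := abs_pos.2 ha
  have hev := hga.hasStrictFDerivAt.isLittleO.def (c := |L ei| / 2) (by positivity)
  rw [nhds_prod_eq] at hev
  obtain ⟨V, hV, hVV⟩ := Filter.eventually_prod_self_iff'.1 hev
  obtain ⟨W, hW, hWa⟩ : ∃ W ∈ 𝓝 z0, ∀ z ∈ W, AnalyticAt ℝ u z :=
    ⟨_, hu.eventually_analyticAt, fun z hz => hz⟩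
  set S : Set E2 := {z | z ∈ V ∩ W ∧ fderiv ℝ u z = 0} with hS
  obtain ⟨C, hC0, hC⟩ : ∃ C : ℝ, 0 < C ∧ ∀ z ∈ S, ∀ w ∈ S, ‖z - w‖ ≤ C * |z j - w j| := by
    refine ⟨1 + (|L ej| + |L ei| / 2) / (|L ei| / 2), by positivity, ?_⟩
    intro z hz w hw
    have h1 := hVV z hz.1.1 w hw.1.1
    have gz : g z = 0 := by simp [hg, dirD, hz.2]
    have gw : g w = 0 := by simp [hg, dirD, hw.2]
    simp only [gz, gw] at h1
    rw [sub_self, zero_sub, norm_neg, ← hL] at h1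
    have hd := hdec (z - w)
    have hn : ‖z - w‖ ≤ |z i - w i| + |z j - w j| := by
      conv_lhs => rw [hd]
      refine (norm_add_le _ _).trans ?_
      simp [norm_smul, hei, hej]
    have hLz : L (z - w) = (z i - w i) * L ei + (z j - w j) * L ej := by
      conv_lhs => rw [hd]
      simp
    rw [hLz, Real.norm_eq_abs] at h1
    have h2 : |z i - w i| * |L ei| ≤ |(z i - w i) * L ei + (z j - w j) * L ej| + |z j - w j| * |L ej| := by
      rw [← abs_mul, ← abs_mul]
      have := abs_sub ((z i - w i) * L ei + (z j - w j) * L ej) ((z j - w j) * L ej)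
      simpa using this
    have h3 : |z i - w i| * (|L ei| / 2) ≤ |z j - w j| * (|L ej| + |L ei| / 2) := by
      nlinarith
    have h4 : |z i - w i| ≤ |z j - w j| * (|L ej| + |L ei| / 2) / (|L ei| / 2) := by
      rw [le_div_iff₀ (by positivity)]; exact h3
    calc _ ≤ _ := hn
      _ ≤ |z j - w j| * (|L ej| + |L ei| / 2) / (|L ei| / 2) + |z j - w j| := by gcongr
      _ = _ := by ring
  refine ⟨V ∩ W, inter_mem hV hW, ?_⟩
  change volume (u '' S) = 0
  set π : E2 → ℝ := fun z => z j with hπ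
  set ψ := Function.invFunOn π S
  have hψ : ∀ z ∈ S, ψ (π z) = z := by
    intro z hz
    have hex : ∃ a ∈ S, π a = π z := ⟨z, hz, rfl⟩
    have h1 := Function.invFunOn_mem hex
    have h2 := Function.invFunOn_eq hex
    have h3 := hC _ h1 z hz
    have h2' : (Function.invFunOn π S (π z)) j = z j := h2
    rw [h2', sub_self, abs_zero, mul_zero] at h3
    exact sub_eq_zero.1 (norm_le_zero_iff.1 h3)
  have himg : u '' S = (u ∘ ψ) '' (π '' S) := by
    rw [image_image]
    exact image_congr fun z hz => by simp [hψ z hz]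
  rw [himg]
  refine addHaar_image_eq_zero_of_det_fderivWithin_eq_zero volume (f' := fun _ => 0) ?_ ?_
  · rintro _ ⟨z, hz, rfl⟩
    have hder : HasFDerivAt u (0 : E2 →L[ℝ] ℝ) z := by
      rw [← hz.2]; exact (hWa z hz.1.2).differentiableAt.hasFDerivAt
    have hψO : (fun s => ψ s - z) =O[𝓝[π '' S] (π z)] (fun s => s - π z) := by
      refine Asymptotics.IsBigO.of_bound C ?_
      filter_upwards [self_mem_nhdsWithin] with s hs
      obtain ⟨w, hw, rfl⟩ := hs
      rw [hψ w hw]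
      exact hC w hw z hz
    have hψt : Tendsto ψ (𝓝[π '' S] (π z)) (𝓝 z) := by
      rw [tendsto_iff_norm_sub_tendsto_zero]
      have : Tendsto (fun s => s - π z) (𝓝[π '' S] (π z)) (𝓝 0) := by
        have : Tendsto (fun s => s - π z) (𝓝 (π z)) (𝓝 (π z - π z)) :=
          (continuous_id.sub continuous_const).tendsto _
        rw [sub_self] at this
        exact this.mono_left nhdsWithin_le_nhds
      exact (hψO.trans_tendsto this).norm.trans (by simp)
    rw [hasFDerivWithinAt_iff_isLittleO]
    have h1 := (hasFDerivAt_iff_isLittleO.1 hder).comp_tendsto hψt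
    have h2 := h1.trans_isBigO hψO
    simpa [Function.comp_def, hψ z hz] using h2
  · intro x _
    simp

/-- On a connected set of critical points with at least two points,
`u` is a nonzero constant. -/
theorem nonzero_constant_on_connected_critical_set
    (Ω U : Set E2) (hΩne : Ω.Nonempty) (hΩo : IsOpen Ω)
    (hΩb : Bornology.IsBounded Ω)
    (hUo : IsOpen U) (hUconn : IsConnected U) (hsub : closure Ω ⊆ U)
    (lam : ℝ) (hlam : 0 < lam)
    (u : E2 → ℝ) (hu : AnalyticOnNhd ℝ u U)
    (hne : ∃ z ∈ U, u z ≠ 0)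
    (heq : ∀ z ∈ U, lap u z + lam * u z = 0)
    (A : Set E2) (hA : A ⊆ closure Ω) (hconn : IsConnected A) (hnt : A.Nontrivial)
    (hcrit : ∀ z ∈ A, gradient u z = 0) :
    (∀ z ∈ A, ∀ w ∈ A, u z = u w) ∧ (∀ z ∈ A, u z ≠ 0) := by
  have hAU : A ⊆ U := hA.trans hsub
  have hf : ∀ z ∈ A, fderiv ℝ u z = 0 := by
    intro z hz
    have := hcrit z hz
    simpa [gradient] using this
  have hnz : ∀ z ∈ A, u z ≠ 0 := by
    intro z0 hz0 h0
    have hacc : AccPt z0 (𝓟 A) := hconn.isPreconnected.preperfect_of_nontrivial hnt z0 hz0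
    have hcl : z0 ∈ closure (A \ {z0}) := by
      rw [accPt_principal_iff_nhdsWithin] at hacc
      exact mem_closure_iff_nhdsWithin_neBot.2 hacc
    obtain ⟨x, hx, hxl⟩ := mem_closure_iff_seq_limit.1 hcl
    obtain ⟨y, hy, hy0⟩ := hne
    refine hy0 (no_zero_acc hUo hUconn.isPreconnected hu lam heq (hAU hz0) h0
      (fun k => x k - z0) (fun k => sub_ne_zero.2 (hx k).2) ?_ ?_ hy)
    · simpa using hxl.sub_const z0
    · intro k
      simpa using hf _ (hx k).1
  refine ⟨?_, hnz⟩
  have hloc : ∀ z ∈ A, ∃ V ∈ 𝓝[A] z, volume (u '' (V ∩ A)) = 0 := by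
    intro z hz
    have hlap : lap u z ≠ 0 := by
      intro h
      have := heq z (hAU hz)
      rw [h, zero_add] at this
      exact (mul_ne_zero hlam.ne' (hnz z hz)) this
    rw [lap, Fin.sum_univ_two, iteratedFDeriv_two_apply, iteratedFDeriv_two_apply] at hlap
    have : ∃ V ∈ 𝓝 z, volume (u '' {y | y ∈ V ∧ fderiv ℝ u y = 0}) = 0 := by
      by_cases h : fderiv ℝ (fderiv ℝ u) z (EuclideanSpace.single 0 1)
          (EuclideanSpace.single 0 1) = 0
      · exact local_sard 1 0 (by decide) (by decide) (hu z (hAU hz)) (by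
          intro h'; exact hlap (by rw [h, h', add_zero]))
      · exact local_sard 0 1 (by decide) (by decide) (hu z (hAU hz)) h
    obtain ⟨V, hV, h⟩ := this
    refine ⟨V, mem_nhdsWithin_of_mem_nhds hV, measure_mono_null (image_mono ?_) h⟩
    exact fun y hy => ⟨hy.1, hf y hy.2⟩
  choose! V hV hV0 using hloc
  obtain ⟨T, hTA, hTc, hT⟩ := TopologicalSpace.countable_cover_nhdsWithin hV
  have hnull : volume (u '' A) = 0 := by
    have hsubs : u '' A ⊆ ⋃ z ∈ T, u '' (V z ∩ A) := by
      rintro _ ⟨y, hy, rfl⟩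
      obtain ⟨z, hz, hyz⟩ := mem_iUnion₂.1 (hT hy)
      exact mem_iUnion₂.2 ⟨z, hz, y, ⟨hyz, hy⟩, rfl⟩
    exact measure_mono_null hsubs ((measure_biUnion_null_iff hTc).2 fun z hz => hV0 z (hTA hz))
  have hpre : (u '' A).OrdConnected :=
    (hconn.isPreconnected.image u (fun z hz =>
      (hu z (hAU hz)).continuousAt.continuousWithinAt)).ordConnected
  have hle : ∀ z ∈ A, ∀ w ∈ A, u z ≤ u w := by
    intro z hz w hw
    by_contra! hlt
    have h1 : Icc (u w) (u z) ⊆ u '' A := hpre.out ⟨w, hw, rfl⟩ ⟨z, hz, rfl⟩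
    have h2 := measure_mono_null h1 hnull
    rw [Real.volume_Icc, ENNReal.ofReal_eq_zero] at h2
    linarith
  exact fun z hz w hw => le_antisymm (hle z hz w hw) (hle w hw z hz)
end
end

section
/- Let Ω, U, λ, u be as in the setting. Every critical point z₀ ∈ closure(Ω) of u that is neither a local minimum point nor a local maximum point of u is an isolated critical point (there exists ε > 0 such that z₀ is the only point w in the open ball of radius ε around z₀ with ∇u(w) = 0). Consequently, the set of critical points of u in closure(Ω) that are neither local minimum points nor local maximum points of u is finite. -/
open Metric Set Filter Topology MeasureTheory

noncomputable section

section
variable {E F : Type*} [NormedAddCommGroup E] [NormedSpace ℝ E] [NormedAddCommGroup F]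
  [NormedSpace ℝ F] [CompleteSpace F]

lemma derivSeries_eq_zero (p : FormalMultilinearSeries ℝ E F) (n : ℕ) (h : p (1 + n) = 0) :
    p.derivSeries n = 0 := by
  have : p.changeOriginSeries 1 n = 0 := by
    unfold FormalMultilinearSeries.changeOriginSeries
    apply Finset.sum_eq_zero
    intro s _
    unfold FormalMultilinearSeries.changeOriginSeriesTerm
    simp only [h]
    exact LinearIsometryEquiv.map_zero _
  ext
  simp [FormalMultilinearSeries.derivSeries, this]

lemma leading_term (f : E → F) (z0 : E) (hf : AnalyticAt ℝ f z0)
    (hne : ¬ ∀ᶠ z in 𝓝 z0, f z = 0) :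
    ∃ k : ℕ, ∃ Q : ContinuousMultilinearMap ℝ (fun _ : Fin k => E) F,
      (∃ y, Q (fun _ => y) ≠ 0) ∧
      (fun y => f (z0 + y) - Q (fun _ => y)) =O[𝓝 0] (fun y => ‖y‖ ^ (k + 1)) ∧
      (fun y => fderiv ℝ f (z0 + y) - fderiv ℝ (fun y => Q (fun _ => y)) y)
        =O[𝓝 0] (fun y => ‖y‖ ^ k) := by
  classical
  obtain ⟨p, r, hp⟩ := hf
  have hex : ∃ k, ∃ y, p k (fun _ => y) ≠ 0 := by
    by_contra! hcon
    apply hne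
    filter_upwards [Metric.eball_mem_nhds z0 hp.r_pos] with z hz
    have h1 := hp.hasSum (y := z - z0) (by simpa [edist_eq_enorm_sub] using hz)
    simp only [hcon, add_sub_cancel] at h1
    exact h1.unique hasSum_zero
  let k := Nat.find hex
  have hk : ∃ y, p k (fun _ => y) ≠ 0 := Nat.find_spec hex
  have hlt : ∀ n < k, ∀ y, p n (fun _ => y) = 0 := fun n hn => by
    have := Nat.find_min hex hn
    push Not at this
    exact this
  let g : E → F := fun y => f (z0 + y) - p k (fun _ => y)
  let q : FormalMultilinearSeries ℝ E F := fun n => if n ≤ k then 0 else p n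
  have hq0 : ∀ n ≤ k, q n = 0 := fun n hn => by simp [q, hn]
  have hq : HasFPowerSeriesOnBall g q 0 r := by
    refine ⟨hp.r_le.trans (FormalMultilinearSeries.radius_le_of_le fun n => ?_), hp.r_pos, ?_⟩
    · by_cases h : n ≤ k <;> simp [q, h]
    · intro y hy
      have h1 := (hp.hasSum hy).sub (hasSum_ite_eq k (p k (fun _ => y)))
      simp only [g, zero_add]
      convert h1 using 1
      funext n
      rcases lt_trichotomy n k with h | h | h
      · simp [q, h.le, h.ne, hlt n h]
      · subst h; simp [q]
      · simp [q, h.not_ge, h.ne']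
  have hQd : Differentiable ℝ (fun y : E => p k (fun _ => y)) := by
    intro y
    exact ((p k).contDiff (n := 1)).differentiable (by simp) |>.comp
      (g := fun m : Fin k → E => p k m) (differentiable_pi.2 fun _ => differentiable_id) y
  refine ⟨k, p k, hk, ?_, ?_⟩
  · have := hq.hasFPowerSeriesAt.isBigO_sub_partialSum_pow (k + 1)
    refine this.congr_left fun y => ?_
    have : q.partialSum (k + 1) y = 0 := by
      apply Finset.sum_eq_zero
      intro n hn
      simp [hq0 n (by simp at hn; omega)]
    simp [this, g]
  · have := hq.fderiv.hasFPowerSeriesAt.isBigO_sub_partialSum_pow k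
    refine this.congr' ?_ EventuallyEq.rfl
    filter_upwards [Metric.eball_mem_nhds 0 hp.r_pos] with y hy
    have hz : q.derivSeries.partialSum k y = 0 := by
      apply Finset.sum_eq_zero
      intro n hn
      rw [derivSeries_eq_zero _ _ (hq0 _ (by simp at hn; omega))]
      simp
    have hfd : DifferentiableAt ℝ f (z0 + y) := 
      (hp.analyticAt_of_mem (by simpa [edist_eq_enorm_sub] using hy)).differentiableAt
    have hfd' : DifferentiableAt ℝ (fun y => f (z0 + y)) y := by
      apply hfd.comp; fun_prop
    simp only [hz, sub_zero, zero_add, g]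
    rw [fderiv_fun_sub hfd' (hQd y), fderiv_comp_add_left]
end

lemma homog_zero {E : Type*} [NormedAddCommGroup E] [NormedSpace ℝ E] (k : ℕ) (c : E → ℝ)
    (hO : c =O[𝓝 0] (fun y => ‖y‖ ^ k)) (hh : ∀ (t : ℝ) y, t * c (t • y) = t ^ k * c y) (y : E) :
    c y = 0 := by
  obtain ⟨C, hC⟩ := hO.bound
  have ht : Tendsto (fun t : ℝ => t • y) (𝓝[>] 0) (𝓝 0) := by
    have : Tendsto (fun t : ℝ => t • y) (𝓝 0) (𝓝 ((0:ℝ) • y)) := by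
      apply Continuous.tendsto; fun_prop
    rw [zero_smul] at this
    exact this.mono_left nhdsWithin_le_nhds
  have h1 : ∀ᶠ t : ℝ in 𝓝[>] 0, |c y| ≤ t * (C * ‖y‖ ^ k) := by
    filter_upwards [ht.eventually hC, self_mem_nhdsWithin] with t h1 h2
    have h2 : 0 < t := h2
    have h3 := hh t y
    rw [norm_pow, norm_norm, norm_smul, Real.norm_eq_abs, Real.norm_eq_abs, abs_of_pos h2] at h1
    have h4 : t ^ k * |c y| = t * |c (t • y)| := by
      have := congrArg abs h3
      rw [abs_mul, abs_mul, abs_pow, abs_of_pos h2] at this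
      exact this.symm
    have h5 : t ^ k * |c y| ≤ t ^ k * (t * (C * ‖y‖ ^ k)) := by
      rw [h4]
      calc t * |c (t • y)| ≤ t * (C * (t * ‖y‖) ^ k) := by gcongr
        _ = _ := by rw [mul_pow]; ring
    exact le_of_mul_le_mul_left h5 (by positivity)
  have h2 : Tendsto (fun t : ℝ => t * (C * ‖y‖ ^ k)) (𝓝[>] 0) (𝓝 0) := by
    have : Tendsto (fun t : ℝ => t * (C * ‖y‖ ^ k)) (𝓝 0) (𝓝 (0 * (C * ‖y‖ ^ k))) := by
      apply Continuous.tendsto; fun_prop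
    rw [zero_mul] at this
    exact this.mono_left nhdsWithin_le_nhds
  have := ge_of_tendsto h2 h1
  exact abs_eq_zero.1 (le_antisymm this (abs_nonneg _))

lemma lap_eq_s5 (u : E2 → ℝ) (z : E2) : lap u z =
    fderiv ℝ (fderiv ℝ u) z (EuclideanSpace.single 0 1) (EuclideanSpace.single 0 1) +
    fderiv ℝ (fderiv ℝ u) z (EuclideanSpace.single 1 1) (EuclideanSpace.single 1 1) := by
  simp [lap, iteratedFDeriv_two_apply]

/-- a homogeneous curl-free divergence-free field has constant norm up to `‖y‖ ^ k`. -/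
lemma harmonic_lower (k : ℕ) (q : E2 → (E2 →L[ℝ] ℝ)) (hq : Differentiable ℝ q)
    (hh : ∀ (t : ℝ) y, q (t • y) = t ^ k • q y) (hne : ∃ y, q y ≠ 0)
    (hsym : ∀ y, fderiv ℝ q y (EuclideanSpace.single 0 1) (EuclideanSpace.single 1 1) =
      fderiv ℝ q y (EuclideanSpace.single 1 1) (EuclideanSpace.single 0 1))
    (htr : ∀ y, fderiv ℝ q y (EuclideanSpace.single 0 1) (EuclideanSpace.single 0 1) +
      fderiv ℝ q y (EuclideanSpace.single 1 1) (EuclideanSpace.single 1 1) = 0) :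
    ∃ c > 0, ∀ y, c * ‖y‖ ^ k ≤ ‖q y‖ := by
  let φ : ℂ ≃ₗᵢ[ℝ] E2 := Complex.orthonormalBasisOneI.repr
  have hφ1 : φ 1 = EuclideanSpace.single 0 1 := by
    have := Complex.orthonormalBasisOneI.repr_self 0
    simpa using this
  have hφI : φ Complex.I = EuclideanSpace.single 1 1 := by
    have := Complex.orthonormalBasisOneI.repr_self 1
    simpa using this
  let T : (E2 →L[ℝ] ℝ) →L[ℝ] ℂ :=
    Complex.ofRealCLM ∘L (ContinuousLinearMap.apply ℝ ℝ (EuclideanSpace.single 0 1 : E2)) -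
    Complex.I • (Complex.ofRealCLM ∘L
      (ContinuousLinearMap.apply ℝ ℝ (EuclideanSpace.single 1 1 : E2)))
  have hT : ∀ l, T l = (l (EuclideanSpace.single 0 1) : ℂ) -
      Complex.I * (l (EuclideanSpace.single 1 1) : ℂ) := fun l => by simp [T]
  have hT0 : ∀ l, T l = 0 → l = 0 := by
    intro l hl
    rw [hT] at hl
    have h0 := congrArg Complex.re hl
    have h1 := congrArg Complex.im hl
    simp at h0 h1
    apply ContinuousLinearMap.coe_injective
    apply (EuclideanSpace.basisFun (Fin 2) ℝ).toBasis.ext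
    intro i
    fin_cases i <;> simp [h0, h1]
  let G : ℂ → ℂ := fun z => T (q (φ z))
  have hGd : ∀ z, HasFDerivAt G (T ∘L (fderiv ℝ q (φ z)) ∘L (φ.toContinuousLinearEquiv : ℂ →L[ℝ] E2)) z := by
    intro z
    exact T.hasFDerivAt.comp z
      (((hq (φ z)).hasFDerivAt).comp z φ.toContinuousLinearEquiv.hasFDerivAt)
  have hG : Differentiable ℂ G := by
    intro z
    rw [differentiableAt_complex_iff_differentiableAt_real]
    refine ⟨(hGd z).differentiableAt, ?_⟩
    rw [(hGd z).fderiv]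
    simp only [ContinuousLinearMap.comp_apply, ContinuousLinearEquiv.coe_coe,
      LinearIsometryEquiv.coe_toContinuousLinearEquiv, hφ1, hφI, hT, smul_eq_mul]
    have e1 := hsym (φ z)
    have e2 := eq_neg_of_add_eq_zero_right (htr (φ z))
    rw [e1, e2]
    push_cast
    linear_combination (fderiv ℝ q (φ z) (EuclideanSpace.single 1 1) (EuclideanSpace.single 0 1) : ℂ) * Complex.I_mul_I
  have hGt : ∀ (t : ℝ), G t = (t : ℂ) ^ k * G 1 := by
    intro t
    have : (t : ℂ) = t • (1 : ℂ) := by simp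
    simp only [G]
    rw [this, map_smul, hh, map_smul]
    simp
  have hGz : G = fun z => z ^ k * G 1 := by
    apply AnalyticOnNhd.eq_of_frequently_eq (𝕜 := ℂ) (z₀ := 0)
    · exact fun z _ => hG.analyticAt z
    · intro z _
      fun_prop
    · have ht : Tendsto (fun t : ℝ => (t : ℂ)) (𝓝[≠] 0) (𝓝[≠] 0) := by
        apply tendsto_nhdsWithin_of_tendsto_nhds_of_eventually_within
        · have : Tendsto (fun t : ℝ => (t : ℂ)) (𝓝 0) (𝓝 ((0:ℝ):ℂ)) := by
            apply Continuous.tendsto; fun_prop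
          exact this.mono_left nhdsWithin_le_nhds
        · filter_upwards [self_mem_nhdsWithin] with t ht
          simpa using ht
      exact ht.frequently (Eventually.frequently (Eventually.of_forall hGt))
  have hG1 : G 1 ≠ 0 := by
    intro h
    obtain ⟨y, hy⟩ := hne
    apply hy
    apply hT0
    have : G (φ.symm y) = 0 := by rw [hGz]; simp [h]
    simpa [G] using this
  have hG1' : 0 < ‖G 1‖ := norm_pos_iff.2 hG1
  refine ⟨‖G 1‖ / (‖T‖ + 1), by positivity, fun y => ?_⟩
  have h1 : ‖G (φ.symm y)‖ = ‖y‖ ^ k * ‖G 1‖ := by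
    rw [hGz]; simp
  have h2 : ‖G (φ.symm y)‖ ≤ ‖T‖ * ‖q y‖ := by
    simpa [G] using T.le_opNorm (q y)
  rw [div_mul_eq_mul_div, div_le_iff₀ (by positivity)]
  nlinarith [norm_nonneg (q y)]

lemma case_a (u : E2 → ℝ) (z0 : E2) (lam : ℝ) (hu : AnalyticAt ℝ u z0) (h0 : u z0 = 0)
    (hne : ¬ ∀ᶠ z in 𝓝 z0, u z = 0) (heq : ∀ᶠ z in 𝓝 z0, lap u z + lam * u z = 0) :
    ∀ᶠ w in 𝓝[≠] z0, fderiv ℝ u w ≠ 0 := by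
  have hdiff : ∀ᶠ z in 𝓝 z0, DifferentiableAt ℝ u z :=
    hu.eventually_analyticAt.mono fun z h => h.differentiableAt
  have hne' : ¬ ∀ᶠ z in 𝓝 z0, fderiv ℝ u z = 0 := by
    intro h
    apply hne
    obtain ⟨r, hr, hb⟩ := Metric.eventually_nhds_iff_ball.1 (h.and hdiff)
    filter_upwards [Metric.ball_mem_nhds z0 hr] with z hz
    have h1 := (convex_ball z0 r).norm_image_sub_le_of_norm_fderiv_le (𝕜 := ℝ) (f := u) (C := 0)
      (fun x hx => (hb x hx).2) (fun x hx => by simp [(hb x hx).1]) (mem_ball_self hr) hz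
    simpa [h0] using h1
  obtain ⟨k, Q, hQ, h1, h2⟩ := leading_term (fderiv ℝ u) z0 hu.fderiv hne'
  let q : E2 → (E2 →L[ℝ] ℝ) := fun y => Q (fun _ => y)
  have hqd : Differentiable ℝ q := by
    intro y
    exact (Q.contDiff (n := 1)).differentiable (by simp) |>.comp
      (g := fun m : Fin k → E2 => Q m) (differentiable_pi.2 fun _ => differentiable_id) y
  have hh : ∀ (t : ℝ) y, q (t • y) = t ^ k • q y := by
    intro t y
    simpa [q] using Q.map_smul_univ (fun _ => t) (fun _ => y)
  have hdh : ∀ (t : ℝ) y, t • fderiv ℝ q (t • y) = t ^ k • fderiv ℝ q y := by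
    intro t y
    rw [← fderiv_comp_smul, ← fderiv_fun_const_smul (hqd y)]
    simp only [hh]
  have hqO : q =O[𝓝 0] (fun y => ‖y‖ ^ k) := by
    apply Asymptotics.IsBigO.of_bound ‖Q‖
    refine Eventually.of_forall fun y => ?_
    have := Q.le_opNorm (fun _ => y)
    simpa [q] using this
  have hfO : (fun y => fderiv ℝ u (z0 + y)) =O[𝓝 0] (fun y => ‖y‖ ^ k) := by
    have h3 : (fun y : E2 => ‖y‖ ^ (k + 1)) =O[𝓝 0] (fun y => ‖y‖ ^ k) := by
      apply Asymptotics.IsBigO.of_bound 1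
      filter_upwards [Metric.ball_mem_nhds (0 : E2) one_pos] with y hy
      simp only [mem_ball_zero_iff] at hy
      simp only [norm_pow, norm_norm, norm_mul, one_mul, pow_succ]
      exact mul_le_of_le_one_right (pow_nonneg (norm_nonneg y) k) hy.le
    have := (h1.trans h3).add hqO
    simpa [q] using this
  have hadd : Tendsto (fun y : E2 => z0 + y) (𝓝 0) (𝓝 z0) := by
    have : Tendsto (fun y : E2 => z0 + y) (𝓝 0) (𝓝 (z0 + 0)) := by
      apply Continuous.tendsto; fun_prop
    simpa using this
  have huO : (fun y => u (z0 + y)) =O[𝓝 0] (fun y => ‖y‖ ^ k) := by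
    obtain ⟨C, hC0, hC⟩ := hfO.exists_nonneg
    obtain ⟨r, hr, hb⟩ := Metric.eventually_nhds_iff_ball.1 (hC.bound.and (hadd.eventually hdiff))
    apply Asymptotics.IsBigO.of_bound C
    filter_upwards [Metric.ball_mem_nhds (0 : E2) hr, Metric.ball_mem_nhds (0 : E2) one_pos]
      with y hy hy1
    simp only [mem_ball_zero_iff] at hy hy1
    have h1 := (convex_closedBall z0 ‖y‖).norm_image_sub_le_of_norm_fderiv_le (𝕜 := ℝ) (f := u)
      (C := C * ‖y‖ ^ k) (x := z0) (y := z0 + y)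
      (fun x hx => by
        have := (hb (x - z0) ?_).2
        · simpa using this
        · rw [mem_closedBall, dist_eq_norm] at hx
          rw [mem_ball_zero_iff]; linarith)
      (fun x hx => by
        rw [mem_closedBall, dist_eq_norm] at hx
        have := (hb (x - z0) (by rw [mem_ball_zero_iff]; linarith)).1
        simp only [add_sub_cancel, norm_pow, norm_norm] at this
        refine this.trans ?_
        gcongr) (by simp) (by simp)
    simp only [h0, sub_zero, add_sub_cancel_left] at h1
    simp only [norm_pow, norm_norm]
    exact h1.trans (mul_le_of_le_one_right (by positivity) hy1.le)
  have key : ∀ (T : (E2 →L[ℝ] E2 →L[ℝ] ℝ) →L[ℝ] ℝ),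
      (fun y => T (fderiv ℝ (fderiv ℝ u) (z0 + y))) =O[𝓝 0] (fun y => ‖y‖ ^ k) →
      ∀ y, T (fderiv ℝ q y) = 0 := by
    intro T hT
    apply homog_zero k
    · have h3 := hT.sub ((T.isBigO_comp _ _).trans h2)
      refine h3.congr_left fun y => ?_
      simp [q]
    · intro t y
      have := congrArg T (hdh t y)
      simpa using this
  let ev : E2 → E2 → (E2 →L[ℝ] E2 →L[ℝ] ℝ) →L[ℝ] ℝ := fun a b =>
    (ContinuousLinearMap.apply ℝ ℝ b) ∘L (ContinuousLinearMap.apply ℝ (E2 →L[ℝ] ℝ) a)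
  have hev : ∀ a b l, ev a b l = l a b := fun a b l => by simp [ev]
  obtain ⟨c, hc, hlow⟩ := harmonic_lower k q hqd hh hQ
    (by
      intro y
      have := key (ev (EuclideanSpace.single 0 1) (EuclideanSpace.single 1 1) +
        (-1 : ℝ) • ev (EuclideanSpace.single 1 1) (EuclideanSpace.single 0 1)) ?_ y
      · simpa [hev, ← sub_eq_add_neg, sub_eq_zero] using this
      · refine (Asymptotics.isBigO_zero (fun y : E2 => ‖y‖ ^ k) (𝓝 0)).congr'
          (f₁ := fun _ => (0 : ℝ)) ?_ EventuallyEq.rfl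
        filter_upwards [hadd.eventually hu.eventually_analyticAt] with y hy
        have := hy.contDiffAt.isSymmSndFDerivAt_of_omega
        simp [hev, this.eq (EuclideanSpace.single 0 1) (EuclideanSpace.single 1 1)])
    (by
      intro y
      have := key (ev (EuclideanSpace.single 0 1) (EuclideanSpace.single 0 1) +
        ev (EuclideanSpace.single 1 1) (EuclideanSpace.single 1 1)) ?_ y
      · simpa [hev] using this
      · refine (huO.const_mul_left (-lam)).congr' ?_ EventuallyEq.rfl
        filter_upwards [hadd.eventually heq] with y hy
        rw [lap_eq_s5] at hy
        simp only [hev, add_apply]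
        linarith)
  obtain ⟨C, hC0, hC⟩ := h1.exists_pos
  have hsub : Tendsto (fun w : E2 => w - z0) (𝓝 z0) (𝓝 0) := by
    have : Tendsto (fun w : E2 => w - z0) (𝓝 z0) (𝓝 (z0 - z0)) := by
      apply Continuous.tendsto; fun_prop
    simpa using this
  rw [eventually_nhdsWithin_iff]
  filter_upwards [hsub.eventually hC.bound, Metric.ball_mem_nhds z0 (div_pos hc hC0)] with w hw hwb hwz hcon
  have hpos : 0 < ‖w - z0‖ := norm_pos_iff.2 (sub_ne_zero.2 hwz)
  rw [mem_ball, dist_eq_norm, lt_div_iff₀ hC0] at hwb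
  simp only [add_sub_cancel, hcon, zero_sub, norm_neg, norm_pow, norm_norm] at hw
  have h3 := (hlow (w - z0)).trans hw
  rw [pow_succ, ← mul_assoc, mul_right_comm] at h3
  have h4 := le_of_mul_le_mul_right h3 (pow_pos hpos k)
  linarith

lemma convex_min (u : E2 → ℝ) (z0 : E2) (r : ℝ) (p z d : E2)
    (hu : ∀ z ∈ ball z0 r, AnalyticAt ℝ u z)
    (hpos : ∀ z ∈ ball z0 r, 0 ≤ fderiv ℝ (fderiv ℝ u) z d d)
    (hp : p ∈ ball z0 r) (hz : z ∈ ball z0 r) (t : ℝ) (hd : z = p + t • d)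
    (hcrit : fderiv ℝ u p = 0) : u p ≤ u z := by
  have hmem : ∀ τ ∈ Icc (0 : ℝ) 1, p + τ • (t • d) ∈ ball z0 r := by
    intro τ hτ
    have := (convex_ball z0 r).add_smul_sub_mem hp hz hτ
    simpa [hd] using this
  have hl : ∀ τ : ℝ, HasDerivAt (fun τ : ℝ => p + τ • (t • d)) (t • d) τ := by
    intro τ
    simpa using ((hasDerivAt_id τ).smul_const (t • d)).const_add p
  have hh : ∀ τ ∈ Icc (0 : ℝ) 1, HasDerivAt (fun τ : ℝ => u (p + τ • (t • d)))
      (fderiv ℝ u (p + τ • (t • d)) (t • d)) τ := by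
    intro τ hτ
    exact (hu _ (hmem τ hτ)).differentiableAt.hasFDerivAt.comp_hasDerivAt τ (hl τ)
  have hh2 : ∀ τ ∈ Icc (0 : ℝ) 1, HasDerivAt (fun τ : ℝ => fderiv ℝ u (p + τ • (t • d)) (t • d))
      (fderiv ℝ (fderiv ℝ u) (p + τ • (t • d)) (t • d) (t • d)) τ := by
    intro τ hτ
    have h1 := (hu _ (hmem τ hτ)).fderiv.differentiableAt.hasFDerivAt.comp_hasDerivAt τ (hl τ)
    exact ((ContinuousLinearMap.apply ℝ ℝ (t • d)).hasFDerivAt.comp_hasDerivAt τ h1)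
  have hmono : MonotoneOn (fun τ : ℝ => fderiv ℝ u (p + τ • (t • d)) (t • d)) (Icc 0 1) := by
    apply monotoneOn_of_deriv_nonneg (convex_Icc 0 1)
    · exact fun τ hτ => (hh2 τ hτ).continuousAt.continuousWithinAt
    · exact fun τ hτ => (hh2 τ (interior_subset hτ)).differentiableAt.differentiableWithinAt
    · intro τ hτ
      rw [(hh2 τ (interior_subset hτ)).deriv]
      have := hpos _ (hmem τ (interior_subset hτ))
      simp only [map_smul, smul_apply, smul_eq_mul, ← mul_assoc]
      exact mul_nonneg (mul_self_nonneg t) this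
  have hmono2 : MonotoneOn (fun τ : ℝ => u (p + τ • (t • d))) (Icc 0 1) := by
    apply monotoneOn_of_deriv_nonneg (convex_Icc 0 1)
    · exact fun τ hτ => (hh τ hτ).continuousAt.continuousWithinAt
    · exact fun τ hτ => (hh τ (interior_subset hτ)).differentiableAt.differentiableWithinAt
    · intro τ hτ
      rw [(hh τ (interior_subset hτ)).deriv]
      have hτ' := interior_subset hτ
      have := hmono (left_mem_Icc.2 zero_le_one) hτ' hτ'.1
      simpa [hcrit] using this
  have := hmono2 (left_mem_Icc.2 zero_le_one) (right_mem_Icc.2 zero_le_one) zero_le_one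
  simpa [hd] using this

lemma case_b (u : E2 → ℝ) (z0 : E2) (hu : AnalyticAt ℝ u z0) (i j : Fin 2) (hij : i ≠ j)
    (hcrit : fderiv ℝ u z0 = 0)
    (hpos : 0 < fderiv ℝ (fderiv ℝ u) z0 (EuclideanSpace.single i 1) (EuclideanSpace.single i 1)) :
    (∀ᶠ w in 𝓝[≠] z0, fderiv ℝ u w ≠ 0) ∨
    (∀ᶠ w in 𝓝 z0, fderiv ℝ u w = 0 → IsLocalMin u w) := by
  have hcover : ∀ a : Fin 2, a = i ∨ a = j := by omega
  have hvec : ∀ v : E2, v j = 0 → v = v i • EuclideanSpace.single i 1 := by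
    intro v hv
    ext a
    rcases hcover a with rfl | rfl
    · simp
    · simp [hv, hij]
  have hfun : ∀ l : E2 →L[ℝ] ℝ, l (EuclideanSpace.single i 1) = 0 →
      l (EuclideanSpace.single j 1) = 0 → l = 0 := by
    intro l h0 h1
    apply ContinuousLinearMap.coe_injective
    apply (EuclideanSpace.basisFun (Fin 2) ℝ).toBasis.ext
    intro a
    rcases hcover a with rfl | rfl
    · simp [h0]
    · simp [h1]
  let prj : E2 →L[ℝ] ℝ := EuclideanSpace.proj j
  let evi : (E2 →L[ℝ] ℝ) →L[ℝ] ℝ := ContinuousLinearMap.apply ℝ ℝ (EuclideanSpace.single i 1)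
  let Φ : E2 → ℝ × ℝ := fun z => (prj z, evi (fderiv ℝ u z))
  let L : E2 →L[ℝ] ℝ × ℝ := prj.prod (evi ∘L fderiv ℝ (fderiv ℝ u) z0)
  have hΦan : AnalyticAt ℝ Φ z0 :=
    (prj.analyticAt z0).prod ((evi.analyticAt _).comp hu.fderiv)
  have hΦd : HasFDerivAt Φ L z0 :=
    prj.hasFDerivAt.prodMk
      (evi.hasFDerivAt.comp z0 hu.fderiv.differentiableAt.hasFDerivAt)
  have hinj : Function.Injective L := by
    rw [injective_iff_map_eq_zero]
    intro v hv
    have h1 : v j = 0 := congrArg Prod.fst hv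
    have h2 : fderiv ℝ (fderiv ℝ u) z0 v (EuclideanSpace.single i 1) = 0 := congrArg Prod.snd hv
    have h3 := hvec v h1
    rw [h3, map_smul, smul_apply, smul_eq_mul, mul_eq_zero] at h2
    rcases h2 with h2 | h2
    · rw [h3, h2, zero_smul]
    · exact absurd h2 hpos.ne'
  let Le : E2 ≃L[ℝ] ℝ × ℝ :=
    (LinearEquiv.ofInjectiveOfFinrankEq (L : E2 →ₗ[ℝ] ℝ × ℝ) hinj (by simp)).toContinuousLinearEquiv
  have hLe : (Le : E2 →L[ℝ] ℝ × ℝ) = L := by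
    ext v <;> rfl
  have hstrict : HasStrictFDerivAt Φ (Le : E2 →L[ℝ] ℝ × ℝ) z0 := by
    rw [hLe, ← hΦd.fderiv]
    exact hΦan.hasStrictFDerivAt
  let e := hstrict.toOpenPartialHomeomorph Φ
  have he : (e : E2 → ℝ × ℝ) = Φ := hstrict.toOpenPartialHomeomorph_coe
  have hsrc : z0 ∈ e.source := hstrict.mem_toOpenPartialHomeomorph_source
  have hΨan : AnalyticAt ℝ e.symm (Φ z0) := by
    have := e.analyticAt_symm' (i := Le) hsrc (by rw [he]; exact hΦan)
      (by rw [he, hΦd.fderiv, hLe])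
    rwa [he] at this
  have hleft : ∀ᶠ w in 𝓝 z0, e.symm (Φ w) = w := by
    have := e.eventually_left_inverse hsrc
    rwa [he] at this
  have hright : ∀ᶠ p in 𝓝 (Φ z0), Φ (e.symm p) = p := by
    have := e.eventually_right_inverse' hsrc
    rwa [he] at this
  have hΦ0 : Φ z0 = (z0 j, 0) := by simp [Φ, hcrit, prj]
  let γ : ℝ → E2 := fun s => e.symm (s, 0)
  have hγ0 : γ (z0 j) = z0 := by
    have := hleft.self_of_nhds
    rwa [hΦ0] at this
  have hγan : AnalyticAt ℝ γ (z0 j) := by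
    rw [hΦ0] at hΨan
    have h1 : AnalyticAt ℝ (fun s : ℝ => (s, (0 : ℝ))) (z0 j) :=
      analyticAt_id.prod analyticAt_const
    exact AnalyticAt.fun_comp (f := fun s : ℝ => (s, (0 : ℝ))) hΨan h1
  have hpair : Tendsto (fun s : ℝ => (s, (0 : ℝ))) (𝓝 (z0 j)) (𝓝 (Φ z0)) := by
    rw [hΦ0]; apply Continuous.tendsto; fun_prop
  have hγr : ∀ᶠ s in 𝓝 (z0 j), Φ (γ s) = (s, 0) := hpair.eventually hright
  have hcritγ : ∀ᶠ w in 𝓝 z0, fderiv ℝ u w = 0 → γ (w j) = w := by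
    filter_upwards [hleft] with w hw hc
    have : Φ w = (w j, 0) := by simp [Φ, hc, prj]
    rwa [this] at hw
  have hprj : Tendsto (fun w : E2 => w j) (𝓝 z0) (𝓝 (z0 j)) := prj.continuous.tendsto z0
  have hDuγ : AnalyticAt ℝ (fun s => fderiv ℝ u (γ s)) (z0 j) :=
    AnalyticAt.fun_comp (by rw [hγ0]; exact hu.fderiv) hγan
  have hψan : AnalyticAt ℝ (fun s => fderiv ℝ u (γ s) (EuclideanSpace.single j 1)) (z0 j) :=
    ((ContinuousLinearMap.apply ℝ ℝ (EuclideanSpace.single j 1 : E2)).analyticAt _).comp hDuγ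
  rcases hψan.eventually_eq_zero_or_eventually_ne_zero with hz | hnz
  · right
    have hD0 : ∀ᶠ s in 𝓝 (z0 j), fderiv ℝ u (γ s) = 0 := by
      filter_upwards [hz, hγr] with s h1 h2
      exact hfun _ (congrArg Prod.snd h2) h1
    have hγu : ∀ᶠ s in 𝓝 (z0 j), AnalyticAt ℝ u (γ s) := by
      have := hγan.continuousAt.tendsto
      rw [hγ0] at this
      exact this.eventually hu.eventually_analyticAt
    have hconst : ∀ᶠ s in 𝓝 (z0 j), u (γ s) = u z0 := by
      obtain ⟨r, hr, hb⟩ := Metric.eventually_nhds_iff_ball.1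
        (hD0.and (hγu.and hγan.eventually_analyticAt))
      have hder : ∀ s ∈ ball (z0 j) r, HasDerivAt (fun s => u (γ s)) 0 s := by
        intro s hs
        obtain ⟨h1, h2, h3⟩ := hb s hs
        have := h2.differentiableAt.hasFDerivAt.comp_hasDerivAt s h3.differentiableAt.hasDerivAt
        rw [h1, zero_apply] at this
        exact this
      filter_upwards [Metric.ball_mem_nhds _ hr] with s hs
      have h1 := (convex_ball (z0 j) r).norm_image_sub_le_of_norm_hasDerivWithin_le (𝕜 := ℝ)
        (f := fun s => u (γ s)) (f' := fun _ => 0) (C := 0)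
        (fun x hx => (hder x hx).hasDerivWithinAt) (fun x hx => by simp) (mem_ball_self hr) hs
      simp only [hγ0, zero_mul, norm_le_zero_iff, sub_eq_zero] at h1
      exact h1
    have hcont2 : ContinuousAt (fun z => fderiv ℝ (fderiv ℝ u) z (EuclideanSpace.single i 1)
        (EuclideanSpace.single i 1)) z0 :=
      (hu.fderiv.fderiv.continuousAt.clm_apply continuousAt_const).clm_apply continuousAt_const
    have hpos' := hcont2.eventually (lt_mem_nhds hpos)
    obtain ⟨r, hr, hb⟩ := Metric.eventually_nhds_iff_ball.1 (hpos'.and hu.eventually_analyticAt)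
    have hγball : ∀ᶠ s in 𝓝 (z0 j), γ s ∈ ball z0 r := by
      have := hγan.continuousAt.tendsto
      rw [hγ0] at this
      exact this.eventually (Metric.ball_mem_nhds z0 hr)
    have hmin : ∀ᶠ z in 𝓝 z0, u z0 ≤ u z := by
      filter_upwards [Metric.ball_mem_nhds z0 hr, hprj.eventually hγball, hprj.eventually hconst,
        hprj.eventually hD0, hprj.eventually hγr] with z h1 h2 h3 h4 h5
      rw [← h3]
      have h6 : (γ (z j)) j = z j := congrArg Prod.fst h5
      refine convex_min u z0 r (γ (z j)) z (EuclideanSpace.single i 1) (fun w hw => (hb w hw).2)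
        (fun w hw => (hb w hw).1.le) h2 h1 ((z - γ (z j)) i) ?_ h4
      rw [← hvec _ (by simp [h6])]
      simp
    filter_upwards [hmin.eventually_nhds, hcritγ, hprj.eventually hconst] with w h1 h2 h3 hc
    rw [h2 hc] at h3
    filter_upwards [h1] with z hz
    rw [h3]; exact hz
  · left
    rw [eventually_nhdsWithin_iff] at hnz ⊢
    filter_upwards [hprj.eventually hnz, hcritγ] with w h1 h2 hw hc
    have h3 := h2 hc
    by_cases hj : w j = z0 j
    · apply hw
      rw [hj, hγ0] at h3
      exact h3.symm
    · apply h1 hj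
      rw [h3, hc]; simp

lemma local_dichotomy (u : E2 → ℝ) (z0 : E2) (lam : ℝ) (hlam : 0 < lam) (hu : AnalyticAt ℝ u z0)
    (hne : ¬ ∀ᶠ z in 𝓝 z0, u z = 0) (heq : ∀ᶠ z in 𝓝 z0, lap u z + lam * u z = 0) :
    (∀ᶠ w in 𝓝[≠] z0, fderiv ℝ u w ≠ 0) ∨
    (∀ᶠ w in 𝓝 z0, fderiv ℝ u w = 0 → IsLocalMin u w ∨ IsLocalMax u w) := by
  by_cases h0 : u z0 = 0
  · exact Or.inl (case_a u z0 lam hu h0 hne heq)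
  by_cases hcrit : fderiv ℝ u z0 = 0
  swap
  · left
    exact (hu.fderiv.continuousAt.eventually_ne hcrit).filter_mono nhdsWithin_le_nhds
  have hex : ∃ i : Fin 2, fderiv ℝ (fderiv ℝ u) z0 (EuclideanSpace.single i 1)
      (EuclideanSpace.single i 1) ≠ 0 := by
    by_contra! hcon
    have h1 := heq.self_of_nhds
    rw [lap_eq_s5, hcon 0, hcon 1] at h1
    have : lam * u z0 = 0 := by linarith
    exact mul_ne_zero hlam.ne' h0 this
  obtain ⟨i, hi⟩ := hex
  obtain ⟨j, hij⟩ : ∃ j : Fin 2, i ≠ j := ⟨i + 1, by fin_cases i <;> simp⟩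
  rcases lt_or_gt_of_ne hi with hneg | hpos
  · have hfd : fderiv ℝ (-u) = -fderiv ℝ u := by
      funext z; exact fderiv_neg
    have h1 := case_b (-u) z0 hu.neg i j hij (by simp [hfd, hcrit]) (by
      rw [hfd, fderiv_neg]
      simpa using hneg)
    rcases h1 with h1 | h1
    · left
      filter_upwards [h1] with w hw
      simpa [hfd] using hw
    · right
      filter_upwards [h1] with w hw hc
      right
      have := (hw (by simp [hfd, hc])).neg
      simpa using this
  · rcases case_b u z0 hu i j hij hcrit hpos with h1 | h1
    · exact Or.inl h1
    · right
      filter_upwards [h1] with w hw hc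
      exact Or.inl (hw hc)

lemma gradient_eq_zero_iff' (u : E2 → ℝ) (w : E2) : gradient u w = 0 ↔ fderiv ℝ u w = 0 := by
  simp [gradient]

/-- Every saddle point (a critical point which is neither a local minimum nor a local
maximum) of `u` in `closure Ω` is an isolated critical point, and the set of such
saddle points is finite. -/
theorem saddle_points_isolated_and_finite
    (Ω U : Set E2) (hΩne : Ω.Nonempty) (hΩo : IsOpen Ω)
    (hΩb : Bornology.IsBounded Ω)
    (hUo : IsOpen U) (hUconn : IsConnected U) (hsub : closure Ω ⊆ U)
    (lam : ℝ) (hlam : 0 < lam)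
    (u : E2 → ℝ) (hu : AnalyticOnNhd ℝ u U)
    (hne : ∃ z ∈ U, u z ≠ 0)
    (heq : ∀ z ∈ U, lap u z + lam * u z = 0) :
    (∀ z₀ ∈ closure Ω, gradient u z₀ = 0 → ¬ IsLocalMin u z₀ → ¬ IsLocalMax u z₀ →
      ∃ ε > 0, ∀ w ∈ ball z₀ ε, gradient u w = 0 → w = z₀) ∧
    {z ∈ closure Ω | gradient u z = 0 ∧ ¬ IsLocalMin u z ∧ ¬ IsLocalMax u z}.Finite := by
  have hnz : ∀ z ∈ U, ¬ ∀ᶠ w in 𝓝 z, u w = 0 := by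
    intro z hz h
    obtain ⟨z1, hz1, hz1'⟩ := hne
    exact hz1' (hu.eqOn_zero_of_preconnected_of_eventuallyEq_zero hUconn.isPreconnected hz h hz1)
  have hdich : ∀ z ∈ U, (∀ᶠ w in 𝓝[≠] z, fderiv ℝ u w ≠ 0) ∨
      (∀ᶠ w in 𝓝 z, fderiv ℝ u w = 0 → IsLocalMin u w ∨ IsLocalMax u w) := fun z hz =>
    local_dichotomy u z lam hlam (hu z hz) (hnz z hz)
      ((hUo.eventually_mem hz).mono fun w hw => heq w hw)
  simp only [gradient_eq_zero_iff']
  constructor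
  · intro z₀ hz₀ hc hmin hmax
    rcases hdich z₀ (hsub hz₀) with h | h
    · rw [eventually_nhdsWithin_iff] at h
      obtain ⟨ε, hε, hb⟩ := Metric.eventually_nhds_iff_ball.1 h
      refine ⟨ε, hε, fun w hw hcw => ?_⟩
      by_contra hne'
      exact hb w hw hne' hcw
    · rcases h.self_of_nhds hc with h | h
      · exact absurd h hmin
      · exact absurd h hmax
  · by_contra hinf
    obtain ⟨z, hz, hacc⟩ := Set.Infinite.exists_accPt_of_subset_isCompact hinf
      (hΩb.isCompact_closure) (fun z hz => hz.1)
    rw [accPt_iff_frequently_nhdsNE] at hacc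
    rcases hdich z (hsub hz) with h | h
    · obtain ⟨w, hw, hw'⟩ := (hacc.and_eventually h).exists
      exact hw' hw.2.1
    · obtain ⟨w, hw, hw'⟩ := (hacc.and_eventually (h.filter_mono nhdsWithin_le_nhds)).exists
      rcases hw' hw.2.1 with h | h
      · exact hw.2.2.1 h
      · exact hw.2.2.2 h
end
end

section
/- Let Ω, U, λ, u be as in the setting. If A ⊆ closure(Ω) is a connected set containing at least two points such that every point of A is a critical point of u, then either every point of A is a local minimum point of u, or every point of A is a local maximum point of u. -/
open Metric Set Filter Topology MeasureTheory

noncomputable section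

open scoped ContDiff

/-- Directional derivative. -/
def dd (w : E2) (v : E2 → ℝ) (z : E2) : ℝ := fderiv ℝ v z w

def ee (i : Fin 2) : E2 := EuclideanSpace.single i 1

lemma ee_decomp (w : E2) : w = w 0 • ee 0 + w 1 • ee 1 := by
  ext i; fin_cases i <;> simp [ee]

lemma dd_analytic {v : E2 → ℝ} {z : E2} (hv : AnalyticAt ℝ v z) (w : E2) :
    AnalyticAt ℝ (dd w v) z := by
  have h := hv.fderiv
  exact ((ContinuousLinearMap.apply ℝ ℝ w).analyticAt _).comp h

lemma fderiv_dd {v : E2 → ℝ} {z : E2} (hv : AnalyticAt ℝ v z) (w x : E2) :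
    fderiv ℝ (dd w v) z x = fderiv ℝ (fderiv ℝ v) z x w := by
  have h := hv.fderiv.differentiableAt
  have h2 := ((ContinuousLinearMap.apply ℝ ℝ w).hasFDerivAt.comp z h.hasFDerivAt).fderiv
  have h3 : dd w v = (ContinuousLinearMap.apply ℝ ℝ w) ∘ (fderiv ℝ v) := rfl
  rw [h3, h2]
  simp

lemma dd_comm {v : E2 → ℝ} {z : E2} (hv : AnalyticAt ℝ v z) (w x : E2) :
    dd x (dd w v) z = dd w (dd x v) z := by
  change fderiv ℝ (dd w v) z x = fderiv ℝ (dd x v) z w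
  rw [fderiv_dd hv, fderiv_dd hv]
  exact (hv.contDiffAt (n := ω)).isSymmSndFDerivAt_of_omega x w

lemma lap_eq_s6 {v : E2 → ℝ} {z : E2} (hv : AnalyticAt ℝ v z) :
    lap v z = dd (ee 0) (dd (ee 0) v) z + dd (ee 1) (dd (ee 1) v) z := by
  change _ = fderiv ℝ (dd (ee 0) v) z (ee 0) + fderiv ℝ (dd (ee 1) v) z (ee 1)
  rw [fderiv_dd hv, fderiv_dd hv]
  simp [lap, iteratedFDeriv_two_apply, ee]

lemma dd_congr {f g : E2 → ℝ} {z : E2} (h : f =ᶠ[𝓝 z] g) (w : E2) : dd w f z = dd w g z := by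
  unfold dd; rw [h.fderiv_eq]

/-- The class of eigenfunctions. -/
def Eig (U : Set E2) (lam : ℝ) (v : E2 → ℝ) : Prop :=
  AnalyticOnNhd ℝ v U ∧
    ∀ z ∈ U, dd (ee 0) (dd (ee 0) v) z + dd (ee 1) (dd (ee 1) v) z + lam * v z = 0

lemma dd_dd_comm {U : Set E2} (hU : IsOpen U) {v : E2 → ℝ} (hv : AnalyticOnNhd ℝ v U)
    {z : E2} (hz : z ∈ U) (e w : E2) : dd e (dd e (dd w v)) z = dd w (dd e (dd e v)) z := by
  have h1 : dd e (dd w v) =ᶠ[𝓝 z] dd w (dd e v) := by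
    filter_upwards [hU.mem_nhds hz] with y hy using dd_comm (hv y hy) w e
  rw [dd_congr h1, dd_comm (dd_analytic (hv z hz) e)]

lemma Eig.dd {U : Set E2} (hU : IsOpen U) {lam : ℝ} {v : E2 → ℝ} (hv : Eig U lam v) (w : E2) :
    Eig U lam (dd w v) := by
  refine ⟨fun z hz => dd_analytic (hv.1 z hz) w, fun z hz => ?_⟩
  rw [dd_dd_comm hU hv.1 hz, dd_dd_comm hU hv.1 hz]
  have h : (fun z => _root_.dd (ee 0) (_root_.dd (ee 0) v) z
      + _root_.dd (ee 1) (_root_.dd (ee 1) v) z + lam * v z) =ᶠ[𝓝 z] fun _ => 0 := by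
    filter_upwards [hU.mem_nhds hz] with y hy using hv.2 y hy
  have h2 := dd_congr h w
  have a0 := (dd_analytic (dd_analytic (hv.1 z hz) (ee 0)) (ee 0)).differentiableAt
  have a1 := (dd_analytic (dd_analytic (hv.1 z hz) (ee 1)) (ee 1)).differentiableAt
  have a2 := (hv.1 z hz).differentiableAt
  unfold _root_.dd at h2 a0 a1 ⊢
  have h3 := ((a0.hasFDerivAt.add a1.hasFDerivAt).add (a2.hasFDerivAt.const_mul lam)).fderiv
  have h4 : fderiv ℝ (fun _ : E2 => (0:ℝ)) z = 0 := by simp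
  rw [h4] at h2
  erw [h3] at h2
  simpa using h2

lemma hess_zero {U A : Set E2} {lam : ℝ} {v : E2 → ℝ} (hv : Eig U lam v)
    (hAU : A ⊆ U) (hacc : Preperfect A) (h0 : ∀ z ∈ A, v z = 0)
    (h1 : ∀ z ∈ A, fderiv ℝ v z = 0) {z : E2} (hz : z ∈ A) :
    fderiv ℝ (fderiv ℝ v) z = 0 := by
  have han := hv.1 z (hAU hz)
  set H := fderiv ℝ (fderiv ℝ v) z with hH
  have hsym : ∀ x y, H x y = H y x := fun x y =>
    (han.contDiffAt (n := ω)).isSymmSndFDerivAt_of_omega x y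
  have htr : H (ee 0) (ee 0) + H (ee 1) (ee 1) = 0 := by
    have := hv.2 z (hAU hz)
    change fderiv ℝ (dd (ee 0) v) z (ee 0) + fderiv ℝ (dd (ee 1) v) z (ee 1) + _ = 0 at this
    rw [fderiv_dd han, fderiv_dd han, h0 z hz] at this
    simpa using this
  have hexp : ∀ x y, H x y = x 0 * (y 0 * H (ee 0) (ee 0) + y 1 * H (ee 0) (ee 1))
      + x 1 * (y 0 * H (ee 0) (ee 1) - y 1 * H (ee 0) (ee 0)) := by
    intro x y
    conv_lhs => rw [ee_decomp x, ee_decomp y]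
    simp only [map_add, map_smul, add_apply, smul_apply,
      smul_eq_mul]
    rw [hsym (ee 1) (ee 0)]
    linear_combination x 1 * y 1 * htr
  by_contra hne
  have hpos : 0 < (H (ee 0) (ee 0))^2 + (H (ee 0) (ee 1))^2 := by
    by_contra hle
    have e1 : H (ee 0) (ee 0) = 0 := by nlinarith [sq_nonneg (H (ee 0) (ee 0)), sq_nonneg (H (ee 0) (ee 1))]
    have e2 : H (ee 0) (ee 1) = 0 := by nlinarith [sq_nonneg (H (ee 0) (ee 0)), sq_nonneg (H (ee 0) (ee 1))]
    apply hne
    ext x y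
    rw [hexp, e1, e2]; simp
  have hinj : Function.Injective H := by
    rw [injective_iff_map_eq_zero]
    intro x hx
    have q0 : H x (ee 0) = 0 := by rw [hx]; rfl
    have q1 : H x (ee 1) = 0 := by rw [hx]; rfl
    rw [hexp] at q0 q1
    simp only [ee, PiLp.single_apply] at q0 q1
    simp at q0 q1
    change x 0 * H (ee 0) (ee 0) + x 1 * H (ee 0) (ee 1) = 0 at q0
    change x 0 * H (ee 0) (ee 1) + -(x 1 * H (ee 0) (ee 0)) = 0 at q1
    have r0 : x 0 * ((H (ee 0) (ee 0))^2 + (H (ee 0) (ee 1))^2) = 0 := by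
      linear_combination H (ee 0) (ee 0) * q0 + H (ee 0) (ee 1) * q1
    have r1 : x 1 * ((H (ee 0) (ee 0))^2 + (H (ee 0) (ee 1))^2) = 0 := by
      linear_combination H (ee 0) (ee 1) * q0 - H (ee 0) (ee 0) * q1
    have s0 : x 0 = 0 := by simpa [hpos.ne'] using r0
    have s1 : x 1 = 0 := by simpa [hpos.ne'] using r1
    rw [ee_decomp x, s0, s1]; simp
  obtain ⟨K, _, hK⟩ := (H : E2 →ₗ[ℝ] (E2 →L[ℝ] ℝ)).exists_antilipschitzWith
    (LinearMap.ker_eq_bot.2 hinj)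
  have hev := han.fderiv.differentiableAt.hasFDerivAt.eventually_ne (c := 0) ⟨K, hK⟩
  have := accPt_iff_frequently_nhdsNE.1 (hacc z hz)
  obtain ⟨y, hy1, hy2⟩ := (this.and_eventually hev).exists
  exact hy2 (h1 y hy1)

lemma iter_zero {U A : Set E2} (hU : IsOpen U) {lam : ℝ} (hAU : A ⊆ U) (hacc : Preperfect A)
    {z : E2} (hz : z ∈ A) (n : ℕ) : ∀ v : E2 → ℝ, Eig U lam v → (∀ z ∈ A, v z = 0) →
    (∀ z ∈ A, fderiv ℝ v z = 0) → iteratedFDeriv ℝ n v z = 0 := by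
  induction n with
  | zero => intro v hv h0 h1; ext m; simp [h0 z hz]
  | succ n ih =>
    intro v hv h0 h1
    ext m
    rw [iteratedFDeriv_succ_apply_right]
    have han := hv.1 z (hAU hz)
    have h := ih (dd (m (Fin.last n)) v) (hv.dd hU _) (fun y hy => by simp [dd, h1 y hy])
      (fun y hy => by
        ext x
        rw [fderiv_dd (hv.1 y (hAU hy)), hess_zero hv hAU hacc h0 h1 hy]; simp)
    have h3 : dd (m (Fin.last n)) v =
      (ContinuousLinearMap.apply ℝ ℝ (m (Fin.last n))) ∘ (fderiv ℝ v) := rfl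
    rw [h3, ContinuousLinearMap.iteratedFDeriv_comp_left _ (han.fderiv.contDiffAt (n := n)) le_rfl] at h
    have := congrArg (fun F => F (Fin.init m)) h
    simpa using this

lemma zero_case {U A : Set E2} (hU : IsOpen U) (hUc : IsPreconnected U) {lam : ℝ} (hAU : A ⊆ U)
    (hacc : Preperfect A) (hAne : A.Nonempty) {v : E2 → ℝ} (hv : Eig U lam v)
    (h0 : ∀ z ∈ A, v z = 0) (h1 : ∀ z ∈ A, fderiv ℝ v z = 0) : ∀ z ∈ U, v z = 0 := by
  obtain ⟨z, hz⟩ := hAne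
  obtain ⟨p, r, hp⟩ := hv.1 z (hAU hz)
  have : v =ᶠ[𝓝 z] 0 := by
    filter_upwards [Metric.eball_mem_nhds z hp.r_pos] with y hy
    have hy' : y - z ∈ Metric.eball (0 : E2) r := by
      simpa [edist_eq_enorm_sub] using hy
    have hs := hp.hasSum_iteratedFDeriv hy'
    simp only [iter_zero hU hAU hacc hz _ v hv h0 h1] at hs
    simp at hs
    have h5 := hs.unique hasSum_zero
    simpa using h5
  exact hv.1.eqOn_zero_of_preconnected_of_eventuallyEq_zero hUc (hAU hz) this

lemma hasDerivAt_line {v : E2 → ℝ} {q e : E2} {s : ℝ} (hv : AnalyticAt ℝ v (q + s • e)) :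
    HasDerivAt (fun s : ℝ => v (q + s • e)) (dd e v (q + s • e)) s := by
  have h1 : HasDerivAt (fun s : ℝ => q + s • e) e s := by
    simpa using ((hasDerivAt_id s).smul_const e).const_add q
  exact hv.differentiableAt.hasFDerivAt.comp_hasDerivAt s h1

lemma line_max {B : Set E2} (hB : Convex ℝ B) (hBo : IsOpen B) {v : E2 → ℝ}
    (hv : AnalyticOnNhd ℝ v B) {e q : E2} {s : ℝ} (h2 : ∀ z ∈ B, dd e (dd e v) z < 0)
    (hq : q ∈ B) (hqs : q + s • e ∈ B) (h1 : dd e v q = 0) : v (q + s • e) ≤ v q := by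
  set S : Set ℝ := {t : ℝ | q + t • e ∈ B} with hS
  have hSo : IsOpen S := hBo.preimage (by fun_prop)
  have hSc : Convex ℝ S := by
    intro a ha b hb x y hx hy hxy
    have := hB ha hb hx hy hxy
    change q + (x • a + y • b) • e ∈ B
    convert this using 1
    simp only [smul_add, add_smul, smul_eq_mul, mul_smul]
    have : q = x • q + y • q := by rw [← add_smul, hxy, one_smul]
    nth_rewrite 1 [this]
    abel
  have hSi : ∀ {t : ℝ}, t ∈ interior S → q + t • e ∈ B := fun {t} ht =>
    (interior_subset ht : t ∈ S)
  have hc : ConcaveOn ℝ S (fun s : ℝ => v (q + s • e)) := by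
    refine concaveOn_of_hasDerivWithinAt2_nonpos (f' := fun s => dd e v (q + s • e))
      (f'' := fun s => dd e (dd e v) (q + s • e)) hSc ?_ ?_ ?_ ?_
    · intro t ht
      exact (hasDerivAt_line (hv _ ht)).continuousAt.continuousWithinAt
    · intro t ht
      exact (hasDerivAt_line (hv _ (hSi ht))).hasDerivWithinAt
    · intro t ht
      exact (hasDerivAt_line (dd_analytic (hv _ (hSi ht)) e)).hasDerivWithinAt
    · intro t ht
      exact (h2 _ (hSi ht)).le
  have h0S : (0:ℝ) ∈ S := by simpa [hS] using hq
  have hsS : s ∈ S := hqs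
  have hd : HasDerivAt (fun s : ℝ => v (q + s • e)) 0 0 := by
    have := hasDerivAt_line (v := v) (q := q) (e := e) (s := 0) (by simpa using hv _ hq)
    simpa [h1] using this
  rcases lt_trichotomy s 0 with h | h | h
  · have := hc.le_slope_of_hasDerivAt hsS h0S h hd
    simp only [slope_def_field, zero_smul, add_zero, zero_sub] at this
    have := (le_div_iff₀ (by linarith)).1 this
    linarith
  · simp [h]
  · have := hc.slope_le_of_hasDerivAt h0S hsS h hd
    simp only [slope_def_field, zero_smul, add_zero, sub_zero] at this
    have := (div_le_iff₀ h).1 this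
    linarith

lemma ee_decomp' {i j : Fin 2} (hij : i ≠ j) (w : E2) : w = w i • ee i + w j • ee j := by
  ext k; fin_cases i <;> fin_cases j <;> fin_cases k <;> simp [ee] at hij ⊢

lemma pos_case {A : Set E2} (hacc : Preperfect A) {v : E2 → ℝ}
    (h1 : ∀ z ∈ A, fderiv ℝ v z = 0) {z : E2} (hz : z ∈ A) (han : AnalyticAt ℝ v z)
    {i j : Fin 2} (hij : i ≠ j) (hneg : dd (ee i) (dd (ee i) v) z < 0) :
    IsLocalMax v z ∧ ∀ᶠ a in 𝓝[A] z, v a = v z := by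
  set e := ee i with he
  have hda := dd_analytic han e
  let P : E2 →L[ℝ] ℝ := EuclideanSpace.proj j
  have hP : ∀ x : E2, P x = x j := fun x => rfl
  let G : E2 → ℝ × ℝ := fun p => (dd e v p, P p)
  have hG : AnalyticAt ℝ G z := hda.prod (P.analyticAt z)
  let L : E2 →L[ℝ] ℝ × ℝ := (fderiv ℝ (dd e v) z).prod P
  have hGL : HasFDerivAt G L z := hda.differentiableAt.hasFDerivAt.prodMk P.hasFDerivAt
  have hinj : Function.Injective (L : E2 →ₗ[ℝ] ℝ × ℝ) := by
    rw [injective_iff_map_eq_zero]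
    intro x hx
    have hx' : (fderiv ℝ (dd e v) z x, x j) = ((0:ℝ), (0:ℝ)) := hx
    obtain ⟨a, b⟩ := Prod.mk.inj hx'
    have hd := ee_decomp' hij x
    rw [b, zero_smul, add_zero] at hd
    rw [hd, map_smul] at a
    have : x i = 0 := by
      rcases mul_eq_zero.1 (show x i * dd e (dd e v) z = 0 from a) with h | h
      · exact h
      · exact absurd h hneg.ne
    rw [hd, this, zero_smul]
  let L' : E2 ≃L[ℝ] ℝ × ℝ := ((L : E2 →ₗ[ℝ] ℝ × ℝ).linearEquivOfInjective hinj
    (by simp)).toContinuousLinearEquiv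
  have hGL' : HasFDerivAt G (L' : E2 →L[ℝ] ℝ × ℝ) z := by
    have hLL : (L' : E2 →L[ℝ] ℝ × ℝ) = L := by
      apply ContinuousLinearMap.ext
      intro x
      rfl
    rw [hLL]
    exact hGL
  have hcd : ContDiffAt ℝ ω G z := hG.contDiffAt
  have hst := hcd.hasStrictFDerivAt' hGL' (by simp)
  set ψ := hst.localInverse G L' z with hψ
  have hψa : AnalyticAt ℝ ψ (G z) :=
    (hcd.to_localInverse hGL' (by simp)).analyticAt
  have hL := hst.eventually_left_inverse
  have hR := hst.eventually_right_inverse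
  rw [← hψ] at hL hR
  have hGz : G z = (0, z j) := by
    simp [G, hP, dd, h1 z hz]
  set γ : ℝ → E2 := fun t => ψ (0, t) with hγ
  have hpair : AnalyticAt ℝ (fun t : ℝ => ((0:ℝ), t)) (z j) := analyticAt_const.prod analyticAt_id
  have hγa : AnalyticAt ℝ γ (z j) := by
    rw [hGz] at hψa
    exact AnalyticAt.comp (g := ψ) (f := fun t : ℝ => ((0:ℝ), t)) hψa hpair
  have hγz : γ (z j) = z := by
    have := hL.self_of_nhds
    rwa [hGz] at this
  have hγG : ∀ᶠ t in 𝓝 (z j), G (γ t) = (0, t) := by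
    rw [hGz] at hR
    exact hpair.continuousAt.eventually hR
  have hproj : Tendsto (fun p : E2 => p j) (𝓝 z) (𝓝 (z j)) := P.continuous.continuousAt
  have hAγ : ∀ᶠ a in 𝓝 z, a ∈ A → γ (a j) = a := by
    filter_upwards [hL] with a ha haA
    have : G a = (0, a j) := by simp [G, hP, dd, h1 a haA]
    rwa [this] at ha
  have hka : AnalyticAt ℝ (fun t => dd (ee j) v (γ t)) (z j) := by
    have : AnalyticAt ℝ (dd (ee j) v) (γ (z j)) := by rw [hγz]; exact dd_analytic han _
    exact this.comp hγa
  have hk0 : ∀ᶠ t in 𝓝 (z j), dd (ee j) v (γ t) = 0 := by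
    rw [← hka.frequently_zero_iff_eventually_zero]
    intro hcon
    rw [eventually_nhdsWithin_iff] at hcon
    have hc2 := hproj.eventually hcon
    have hfr := accPt_iff_frequently_nhdsNE.1 (hacc z hz)
    have hev : ∀ᶠ a in 𝓝[≠] z, a ≠ z := eventually_mem_nhdsWithin
    obtain ⟨a, haA, ⟨hq, hg⟩, hne⟩ := (hfr.and_eventually
      (((hc2.and hAγ).filter_mono nhdsWithin_le_nhds).and hev)).exists
    have hg := hg haA
    refine hq ?_ ?_
    · intro h
      have h : a j = z j := h
      rw [h, hγz] at hg
      exact hne hg.symm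
    · change dd (ee j) v (γ (a j)) = 0
      rw [hg]; simp [dd, h1 a haA]
  have hcrit : ∀ᶠ t in 𝓝 (z j), fderiv ℝ v (γ t) = 0 := by
    filter_upwards [hk0, hγG] with t ht1 ht2
    have ht3 : fderiv ℝ v (γ t) (ee i) = 0 := (Prod.mk.inj ht2).1
    ext x
    rw [ee_decomp' hij x, map_add, map_smul, map_smul, ht3, show fderiv ℝ v (γ t) (ee j) = 0 from ht1]
    simp
  have hconst : ∀ᶠ t in 𝓝 (z j), v (γ t) = v z := by
    have hvan : ∀ᶠ t in 𝓝 (z j), AnalyticAt ℝ v (γ t) :=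
      hγa.continuousAt.eventually (by rw [hγz]; exact han.eventually_analyticAt)
    have hd : ∀ᶠ t in 𝓝 (z j), HasDerivAt (v ∘ γ) 0 t := by
      filter_upwards [hcrit, hvan, hγa.eventually_analyticAt] with t a b c
      have := b.differentiableAt.hasFDerivAt.comp_hasDerivAt t c.differentiableAt.hasDerivAt
      rw [a] at this
      simpa using this
    obtain ⟨r, hr, hball⟩ := Metric.eventually_nhds_iff_ball.1 hd
    filter_upwards [Metric.ball_mem_nhds _ hr] with t ht
    have := Metric.isOpen_ball.is_const_of_deriv_eq_zero (convex_ball (z j) r).isPreconnected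
      (fun x hx => (hball x hx).differentiableAt.differentiableWithinAt)
      (fun x hx => (hball x hx).deriv) ht (Metric.mem_ball_self hr)
    simpa [hγz] using this
  constructor
  · have hnn : ∀ᶠ p in 𝓝 z, AnalyticAt ℝ v p ∧ dd e (dd e v) p < 0 :=
      han.eventually_analyticAt.and ((dd_analytic hda e).continuousAt.eventually_lt_const hneg)
    obtain ⟨r, hr, hball⟩ := Metric.eventually_nhds_iff_ball.1 hnn
    have hγB : ∀ᶠ t in 𝓝 (z j), γ t ∈ Metric.ball z r :=
      hγa.continuousAt.eventually (by rw [hγz]; exact Metric.ball_mem_nhds z hr)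
    filter_upwards [Metric.ball_mem_nhds z hr, hproj.eventually (hγB.and (hconst.and hγG))]
      with p hp ⟨q1, q2, q3⟩
    obtain ⟨q4, q5⟩ := Prod.mk.inj q3
    have q5 : (γ (p j)) j = p j := q5
    have hpe : p = γ (p j) + (p i - (γ (p j)) i) • e := by
      have a1 := ee_decomp' hij p
      have a2 := ee_decomp' hij (γ (p j))
      rw [q5] at a2
      rw [sub_smul]
      generalize γ (p j) = q at *
      nth_rewrite 1 [a1]
      nth_rewrite 1 [a2]
      simp only [he]
      abel
    rw [← q2]
    have := line_max (convex_ball z r) Metric.isOpen_ball (fun x hx => (hball x hx).1)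
      (fun x hx => (hball x hx).2) q1 (hpe ▸ hp) q4
    rwa [← hpe] at this
  · rw [eventually_nhdsWithin_iff]
    filter_upwards [hAγ, hproj.eventually hconst] with a h2 h3 h4
    rw [← h3, h2 h4]

lemma pos_case' {U A : Set E2} {lam : ℝ} (hlam : 0 < lam) (hAU : A ⊆ U) (hacc : Preperfect A)
    {v : E2 → ℝ} (hv : Eig U lam v)
    (h1 : ∀ z ∈ A, fderiv ℝ v z = 0) {z : E2} (hz : z ∈ A) (hpos : 0 < v z) :
    IsLocalMax v z ∧ ∀ᶠ a in 𝓝[A] z, v a = v z := by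
  have h := hv.2 z (hAU hz)
  have h' := mul_pos hlam hpos
  by_cases h0 : dd (ee 0) (dd (ee 0) v) z < 0
  · exact pos_case hacc h1 hz (hv.1 z (hAU hz)) (i := 0) (j := 1) (by decide) h0
  · exact pos_case hacc h1 hz (hv.1 z (hAU hz)) (i := 1) (j := 0) (by decide) (by linarith)

lemma dd_neg (w : E2) (v : E2 → ℝ) : dd w (-v) = -dd w v := by
  ext z; simp [dd, fderiv_neg]

lemma Eig.neg {U : Set E2} {lam : ℝ} {v : E2 → ℝ} (hv : Eig U lam v) : Eig U lam (-v) := by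
  refine ⟨hv.1.neg, fun z hz => ?_⟩
  simp only [dd_neg, Pi.neg_apply]
  linarith [hv.2 z hz]

lemma neg_case' {U A : Set E2} {lam : ℝ} (hlam : 0 < lam) (hAU : A ⊆ U) (hacc : Preperfect A)
    {v : E2 → ℝ} (hv : Eig U lam v)
    (h1 : ∀ z ∈ A, fderiv ℝ v z = 0) {z : E2} (hz : z ∈ A) (hneg : v z < 0) :
    IsLocalMin v z ∧ ∀ᶠ a in 𝓝[A] z, v a = v z := by
  obtain ⟨a, b⟩ := pos_case' hlam hAU hacc hv.neg
    (fun z hz => by simp [fderiv_neg, h1 z hz]) hz (by simpa using hneg)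
  refine ⟨by simpa using a.neg, by simpa using b⟩

/-- A connected set of critical points of `u` with at least two points consists either
entirely of local minimum points or entirely of local maximum points of `u`. -/
theorem connected_critical_set_min_or_max
    (Ω U : Set E2) (hΩne : Ω.Nonempty) (hΩo : IsOpen Ω)
    (hΩb : Bornology.IsBounded Ω)
    (hUo : IsOpen U) (hUconn : IsConnected U) (hsub : closure Ω ⊆ U)
    (lam : ℝ) (hlam : 0 < lam)
    (u : E2 → ℝ) (hu : AnalyticOnNhd ℝ u U)
    (hne : ∃ z ∈ U, u z ≠ 0)
    (heq : ∀ z ∈ U, lap u z + lam * u z = 0)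
    (A : Set E2) (hA : A ⊆ closure Ω) (hconn : IsConnected A) (hnt : A.Nontrivial)
    (hcrit : ∀ z ∈ A, gradient u z = 0) :
    (∀ z ∈ A, IsLocalMin u z) ∨ (∀ z ∈ A, IsLocalMax u z) := by
  have hAU : A ⊆ U := hA.trans hsub
  have hacc : Preperfect A := hconn.isPreconnected.preperfect_of_nontrivial hnt
  have hE : Eig U lam u := ⟨hu, fun z hz => by rw [← lap_eq_s6 (hu z hz)]; exact heq z hz⟩
  have h1 : ∀ z ∈ A, fderiv ℝ u z = 0 := by
    intro z hz
    have := hcrit z hz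
    simpa [gradient] using this
  have hloc : ∀ z ∈ A, u z ≠ 0 → ∀ᶠ a in 𝓝[A] z, u a = u z := by
    intro z hz h
    rcases lt_or_gt_of_ne h with h | h
    · exact (neg_case' hlam hAU hacc hE h1 hz h).2
    · exact (pos_case' hlam hAU hacc hE h1 hz h).2
  by_cases hall : ∀ z ∈ A, u z = 0
  · obtain ⟨z, hz, hz0⟩ := hne
    exact absurd (zero_case hUo hUconn.isPreconnected hAU hacc hconn.nonempty hE hall h1 z hz) hz0
  · push Not at hall
    obtain ⟨z, hz, hz0⟩ := hall
    have hcst : ∀ a ∈ A, u a = u z := by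
      have : PreconnectedSpace A := isPreconnected_iff_preconnectedSpace.1 hconn.isPreconnected
      have huc : Continuous (fun a : A => u a) := by
        have : ContinuousOn u A := fun a ha => (hu a (hAU ha)).continuousAt.continuousWithinAt
        exact this.domRestrict
      have hcl : IsClopen {a : A | u a = u z} := by
        refine ⟨isClosed_eq huc continuous_const, ?_⟩
        rw [isOpen_iff_mem_nhds]
        intro a ha
        have ha : u a = u z := ha
        have h := hloc a a.2 (by rw [ha]; exact hz0)
        rw [ha, nhdsWithin_eq_map_subtype_coe a.2, eventually_map] at h
        exact h
      have := hcl.eq_univ ⟨⟨z, hz⟩, rfl⟩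
      intro a ha
      have h : (⟨a, ha⟩ : A) ∈ {a : A | u a = u z} := by rw [this]; trivial
      exact h
    rcases lt_or_gt_of_ne hz0 with h | h
    · left
      intro a ha
      exact (neg_case' hlam hAU hacc hE h1 ha (by rw [hcst a ha]; exact h)).1
    · right
      intro a ha
      exact (pos_case' hlam hAU hacc hE h1 ha (by rw [hcst a ha]; exact h)).1
end
end
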